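/- Let m ≥ k ≥ 1 be integers, and let H be a single vertex if k = 1, or the block intersection graph of a balanced incomplete block design with parameters (v, k, 1) with v > k(k−1)² + 1 if k ≥ 2. Then the graph Z_{k,m}(H) has cop number k and zombie number m: c(Z_{k,m}(H)) = k and z(Z_{k,m}(H)) = m. -/

import Mathlib

open SimpleGraph

/-! ### Pursuit games on graphs

A round of the game is recorded as a pair `(c, r)` where `c : Fin k → V` is the
configuration of the `k` pursuers (cops or zombies) and `r : V` the position of the
evader (robber or survivor).  In a round the pursuers move first (knowing the full
history), then the evader moves (knowing the full history and the pursuers' new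
configuration).  Strategies are functions of the full history, so no generality is lost. -/

/-- The history of a play: the list of (pursuer configuration, evader position) pairs
for the completed rounds so far. -/
abbrev GameHist (V : Type*) (k : ℕ) := List ((Fin k → V) × V)

/-- The history determined by the sequences `c` (pursuer configurations) and `r`
(evader positions), recording rounds `0, …, n-1`. -/
def histUpTo {V : Type*} {k : ℕ} (c : ℕ → Fin k → V) (r : ℕ → V) (n : ℕ) : GameHist V k :=
  (List.range n).map fun i => (c i, r i)

/-- The robber/survivor always moves along an edge or stays still. -/
def RobberLegal {V : Type*} (G : SimpleGraph V) (r : ℕ → V) : Prop :=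
  ∀ n, r (n+1) = r n ∨ G.Adj (r n) (r (n+1))

/-- At step `n`, each cop stays still or moves along an edge. -/
def CopStepLegal {V : Type*} (G : SimpleGraph V) {k : ℕ} (c : ℕ → Fin k → V) (n : ℕ) : Prop :=
  ∀ i, c (n+1) i = c n i ∨ G.Adj (c n i) (c (n+1) i)

/-- At step `n`, each zombie moves along an edge to a vertex strictly closer to the
survivor's current position `r n`. -/
def ZombieStepLegal {V : Type*} (G : SimpleGraph V) {k : ℕ} (c : ℕ → Fin k → V) (r : ℕ → V)
    (n : ℕ) : Prop :=
  ∀ i, G.Adj (c n i) (c (n+1) i) ∧ G.dist (c (n+1) i) (r n) < G.dist (c n i) (r n)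

/-- The pursuers follow the history-dependent strategy `mv`: their configuration at time
`n+1` is the strategy applied to the history of rounds `0, …, n`. -/
def FollowsStrat {V : Type*} {k : ℕ} (mv : GameHist V k → Fin k → V)
    (c : ℕ → Fin k → V) (r : ℕ → V) : Prop :=
  ∀ n, c (n+1) = mv (histUpTo c r (n+1))

/-- Starting from the cop configuration `cpos` (the robber then chooses any starting
vertex, and the cops move first), the cops have a strategy catching the robber: in every
play consistent with the strategy there is a time at which some cop and the robber occupy
the same vertex, all cop moves made up to and including the capturing move being legal. -/
def CopsCatchFrom {V : Type*} (G : SimpleGraph V) {k : ℕ} (cpos : Fin k → V) : Prop :=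
  ∃ mv : GameHist V k → Fin k → V,
    ∀ (c : ℕ → Fin k → V) (r : ℕ → V),
      c 0 = cpos → FollowsStrat mv c r → RobberLegal G r →
      ∃ n, ((∃ i, c n i = r n) ∧ ∀ m < n, CopStepLegal G c m) ∨
           ((∃ i, c (n+1) i = r n) ∧ ∀ m ≤ n, CopStepLegal G c m)

/-- `k` cops have a winning strategy on `G`. -/
def CopsWinWith {V : Type*} (G : SimpleGraph V) (k : ℕ) : Prop :=
  ∃ cpos : Fin k → V, CopsCatchFrom G cpos

/-- The cop number of `G`: the least `k` such that `k` cops have a winning strategy. -/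
noncomputable def copNumber {V : Type*} (G : SimpleGraph V) : ℕ :=
  sInf {k | CopsWinWith G k}

/-- Starting from the zombie configuration `zpos` and survivor position `spos`, with the
zombies to move, the zombies have a strategy catching the survivor: in every play
consistent with the strategy there is a time at which some zombie and the survivor occupy
the same vertex, all zombie moves made up to and including the capturing move being legal
(each zombie moves along an edge, strictly decreasing its distance to the survivor). -/
def ZombiesCatchFrom {V : Type*} (G : SimpleGraph V) {k : ℕ} (zpos : Fin k → V) (spos : V) :
    Prop :=
  ∃ mv : GameHist V k → Fin k → V,
    ∀ (c : ℕ → Fin k → V) (r : ℕ → V),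
      c 0 = zpos → r 0 = spos → FollowsStrat mv c r → RobberLegal G r →
      ∃ n, ((∃ i, c n i = r n) ∧ ∀ m < n, ZombieStepLegal G c r m) ∨
           ((∃ i, c (n+1) i = r n) ∧ ∀ m ≤ n, ZombieStepLegal G c r m)

/-- `k` zombies have a winning strategy on `G`: they can choose starting vertices so that
wherever the survivor starts, they catch the survivor. -/
def ZombiesWinWith {V : Type*} (G : SimpleGraph V) (k : ℕ) : Prop :=
  ∃ zpos : Fin k → V, ∀ spos : V, ZombiesCatchFrom G zpos spos

/-- The zombie number of `G`: the least `k` such that `k` zombies have a winning strategy. -/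
noncomputable def zombieNumber {V : Type*} (G : SimpleGraph V) : ℕ :=
  sInf {k | ZombiesWinWith G k}

/-- Starting from the zombie configuration `zpos` and survivor position `spos`, with the
zombies to move, the survivor has a strategy evading capture forever: in every play where
the survivor follows the strategy and the zombies move legally, the survivor's moves are
legal and no zombie ever occupies the survivor's vertex. -/
def SurvivorEvadesFrom {V : Type*} (G : SimpleGraph V) {k : ℕ} (zpos : Fin k → V) (spos : V) :
    Prop :=
  ∃ mv : GameHist V k → (Fin k → V) → V,
    ∀ (c : ℕ → Fin k → V) (r : ℕ → V),
      c 0 = zpos → r 0 = spos →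
      (∀ n, r (n+1) = mv (histUpTo c r (n+1)) (c (n+1))) →
      (∀ n, ZombieStepLegal G c r n) →
      RobberLegal G r ∧ ∀ n, (∀ i, c n i ≠ r n) ∧ (∀ i, c (n+1) i ≠ r n)

/-- Zombie-move legality in the variant where in each round the survivor moves first:
at step `n` each zombie moves along an edge, strictly decreasing its distance to the
survivor's current position `r (n+1)`. -/
def ZombieStepLegalAfter {V : Type*} (G : SimpleGraph V) {k : ℕ} (c : ℕ → Fin k → V)
    (r : ℕ → V) (n : ℕ) : Prop :=
  ∀ i, G.Adj (c n i) (c (n+1) i) ∧ G.dist (c (n+1) i) (r (n+1)) < G.dist (c n i) (r (n+1))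

/-- Starting from the zombie configuration `zpos` and survivor position `spos`, with the
survivor to move (the zombies then responding each round), the zombies have a strategy
catching the survivor. -/
def ZombiesCatchFromSurvivorToMove {V : Type*} (G : SimpleGraph V) {k : ℕ}
    (zpos : Fin k → V) (spos : V) : Prop :=
  ∃ mv : GameHist V k → V → Fin k → V,
    ∀ (c : ℕ → Fin k → V) (r : ℕ → V),
      c 0 = zpos → r 0 = spos →
      (∀ n, c (n+1) = mv (histUpTo c r (n+1)) (r (n+1))) →
      RobberLegal G r →
      ∃ n, (∃ i, c 0 i = r 0) ∨
           ((∃ i, c n i = r (n+1)) ∧ ∀ m < n, ZombieStepLegalAfter G c r m) ∨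
           ((∃ i, c (n+1) i = r (n+1)) ∧ ∀ m ≤ n, ZombieStepLegalAfter G c r m)

/-! ### The graphs `T_x`, the arm graphs `A_n`, and attaching an arm to a graph -/

/-- `|i - j| = 1 or 4` for `i j : Fin 5`, i.e. `i` and `j` are cyclically consecutive. -/
def fin5adj (i j : Fin 5) : Prop :=
  ((i : ℕ) + 1) % 5 = (j : ℕ) ∨ ((j : ℕ) + 1) % 5 = (i : ℕ)

/-- The vertices of the arm graph `A_n`: the vertex `b₂⁻¹` (`start`), the vertex `b₀ⁿ`
(`finish`), and for each copy `T_x` (`x : Fin n`) the inside vertices `a_i^x`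
(`inner x i`), the outside vertices `b_i^x` (`outer x i`) and the center `c^x`
(`center x`). -/
inductive ArmVert (n : ℕ) : Type
  | start : ArmVert n
  | finish : ArmVert n
  | inner : Fin n → Fin 5 → ArmVert n
  | outer : Fin n → Fin 5 → ArmVert n
  | center : Fin n → ArmVert n
  deriving DecidableEq

/-- One direction of the edge relation of the arm graph `A_n`. -/
def armRel (n : ℕ) : ArmVert n → ArmVert n → Prop
  | .inner x i, .inner y j => x = y ∧ fin5adj i j
  | .outer x i, .outer y j => (x = y ∧ fin5adj i j) ∨ ((x : ℕ) + 1 = (y : ℕ) ∧ (i : ℕ) = 2 ∧ (j : ℕ) = 0)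
  | .inner x i, .outer y j => x = y ∧ (i = j ∨ fin5adj i j)
  | .inner x _, .center y => x = y
  | .start, .outer y j => (y : ℕ) = 0 ∧ (j : ℕ) = 0
  | .outer x i, .finish => (x : ℕ) + 1 = n ∧ (i : ℕ) = 2
  | .start, .finish => n = 0
  | _, _ => False

/-- The arm graph `A_n`. -/
def armGraph (n : ℕ) : SimpleGraph (ArmVert n) := SimpleGraph.fromRel (armRel n)

/-- The index of the copy `T_x` containing a vertex of `A_n` (if any). -/
def copyIdx {n : ℕ} : ArmVert n → Option (Fin n)
  | .inner x _ => some x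
  | .outer x _ => some x
  | .center x => some x
  | _ => none

/-- The vertex `b₀ˣ` of `A_n` (for `x = n` this is the final vertex `b₀ⁿ`). -/
def b0 (n x : ℕ) : ArmVert n :=
  if h : x < n then ArmVert.outer ⟨x, h⟩ 0 else ArmVert.finish

/-- The vertex `b₂^{x-1}` of `A_n` (for `x = 0` this is the vertex `b₂⁻¹`). -/
def b2prev (n x : ℕ) : ArmVert n :=
  if h : 1 ≤ x ∧ x - 1 < n then ArmVert.outer ⟨x - 1, h.2⟩ 2 else ArmVert.start

/-- The vertex lies in the copy `T_x`. -/
def InCopy {W : Type*} {n : ℕ} (x : ℕ) (u : W ⊕ ArmVert n) : Prop :=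
  ∃ (a : ArmVert n) (y : Fin n), u = Sum.inr a ∧ copyIdx a = some y ∧ (y : ℕ) = x

/-- One direction of the edge relation of the graph obtained from a graph `H` and the
arm `A_n` by adding an edge from the vertex `b₂⁻¹` of `A_n` to the vertex `v` of `H`. -/
def combRel {W : Type*} (H : SimpleGraph W) (v : W) (n : ℕ) :
    (W ⊕ ArmVert n) → (W ⊕ ArmVert n) → Prop
  | Sum.inl w, Sum.inl w' => H.Adj w w'
  | Sum.inr a, Sum.inr a' => (armGraph n).Adj a a'
  | Sum.inl w, Sum.inr a => w = v ∧ a = ArmVert.start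
  | _, _ => False

/-- The graph obtained from `H` and the arm `A_n` by adding an edge from the vertex
`b₂⁻¹` of `A_n` to the vertex `v` of `H`. -/
def combGraph {W : Type*} (H : SimpleGraph W) (v : W) (n : ℕ) :
    SimpleGraph (W ⊕ ArmVert n) :=
  SimpleGraph.fromRel (combRel H v n)

/-! ### The graphs `Z_{k,m}(H)` -/

/-- The vertices of `Z_{k,m}(H)` where `H` has vertex type `W` and `p = 4*(m-k)`:
the vertices of `H`, for each vertex of `H` a path on `p` vertices, and for each
vertex of `H` `m` copies of the arm graph `A_p`. -/
abbrev ZVert (W : Type*) (m p : ℕ) : Type _ := W ⊕ (W × Fin p) ⊕ (W × Fin m × ArmVert p)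

/-- One direction of the edge relation of `Z_{k,m}(H)`. -/
def zRel {W : Type*} (H : SimpleGraph W) (m p : ℕ) : ZVert W m p → ZVert W m p → Prop
  | Sum.inl w, Sum.inl w' => H.Adj w w'
  | Sum.inl w, Sum.inr (Sum.inl (w', j)) => w = w' ∧ (j : ℕ) = 0
  | Sum.inr (Sum.inl (w, j)), Sum.inr (Sum.inl (w', j')) => w = w' ∧ (j : ℕ) + 1 = (j' : ℕ)
  | Sum.inl w, Sum.inr (Sum.inr (w', _, a)) => w = w' ∧ a = ArmVert.start
  | Sum.inr (Sum.inr (w, i, a)), Sum.inr (Sum.inr (w', i', a')) =>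
      w = w' ∧ i = i' ∧ (armGraph p).Adj a a'
  | _, _ => False

/-- The graph `Z_{k,m}(H)`: to each vertex `v` of `H` we attach (by an edge from `v` to
the first path vertex, resp. to `b₂⁻¹`) one path on `4*(m-k)` vertices and `m` copies of
the arm graph `A_{4*(m-k)}`. -/
def ZGraph {W : Type*} (H : SimpleGraph W) (k m : ℕ) :
    SimpleGraph (ZVert W m (4 * (m - k))) :=
  SimpleGraph.fromRel (zRel H m (4 * (m - k)))

/-! ### Hypercubes and block intersection graphs -/

/-- The `n`-dimensional hypercube: vertices are `Fin n → Bool`, two vertices being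
adjacent exactly when they differ in exactly one coordinate. -/
def hypercube (n : ℕ) : SimpleGraph (Fin n → Bool) :=
  SimpleGraph.fromRel fun x y => ∃ i, x i ≠ y i ∧ ∀ j, j ≠ i → x j = y j

/-- `(P, B)` is a balanced incomplete block design with parameters `(v, k, 1)`:
`P` has `v` points, every block has `k` points, and every pair of distinct points lies
in exactly one block. -/
def IsBIBD (P : Type*) (B : Finset (Finset P)) (v k : ℕ) : Prop :=
  Nat.card P = v ∧ (∀ b ∈ B, b.card = k) ∧
    ∀ p q : P, p ≠ q → ∃! b : Finset P, b ∈ B ∧ p ∈ b ∧ q ∈ b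

/-- The block intersection graph of a collection `B` of blocks: vertices are the blocks,
two distinct blocks being adjacent exactly when they intersect. -/
def blockGraph {P : Type*} (B : Finset (Finset P)) : SimpleGraph {b // b ∈ B} :=
  SimpleGraph.fromRel fun b b' => ∃ p, p ∈ b.val ∧ p ∈ b'.val

/-! ### Zombie-good positions on a graph with an attached arm -/

/-- A position (with the zombies to move) in the game on the graph obtained by attaching
the arm `A_n` to `H` at `v` is `x`-zombie-good if: the survivor is in some `T_y` with
`y ≥ x` or at `b₀ⁿ`; for some `i ≥ 1` the zombies `z_1, …, z_i` are all at `b₀ˣ`; the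
remaining zombies are in `H ∪ {b₂⁻¹} ∪ T_0 ∪ ⋯ ∪ T_{x-1}`; consecutive zombie distances
to the survivor satisfy `0 ≤ d_{j+1} - d_j ≤ 4`; and `d_m - d_1 ≥ n - x`. -/
def ZombieGood {W : Type*} (H : SimpleGraph W) (v : W) (n m x : ℕ)
    (zpos : Fin m → (W ⊕ ArmVert n)) (spos : W ⊕ ArmVert n) : Prop :=
  (∃ a : ArmVert n, spos = Sum.inr a ∧
      ((∃ y : Fin n, copyIdx a = some y ∧ x ≤ (y : ℕ)) ∨ a = ArmVert.finish)) ∧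
  (∃ i : ℕ, 1 ≤ i ∧ i ≤ m ∧
      (∀ j : Fin m, (j : ℕ) < i → zpos j = Sum.inr (b0 n x)) ∧
      (∀ j : Fin m, i ≤ (j : ℕ) →
        (∃ w, zpos j = Sum.inl w) ∨ zpos j = Sum.inr ArmVert.start ∨
          (∃ (a : ArmVert n) (y : Fin n), zpos j = Sum.inr a ∧ copyIdx a = some y ∧ (y : ℕ) < x))) ∧
  (∀ j : Fin m, ∀ h : (j : ℕ) + 1 < m,
      (combGraph H v n).dist spos (zpos j) ≤ (combGraph H v n).dist spos (zpos ⟨(j : ℕ) + 1, h⟩) ∧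
      (combGraph H v n).dist spos (zpos ⟨(j : ℕ) + 1, h⟩) - (combGraph H v n).dist spos (zpos j) ≤ 4) ∧
  (∀ hm : 1 ≤ m,
      n - x ≤ (combGraph H v n).dist spos (zpos ⟨m - 1, by omega⟩) -
        (combGraph H v n).dist spos (zpos ⟨0, by omega⟩))

/-!
Everything depends on how a pursuer crosses a copy `T_x` of an arm. A cop cuts through the center,
so a single cop at the root of an arm catches a robber inside the arm. A zombie must follow a
shortest path, and no shortest path to an outside vertex of `T_x` starting at another outside or
inside vertex of `T_x` uses the center. Hence a survivor can circle along the outside of `T_x` with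
the foremost zombies two steps behind, until another zombie cuts off the circle. Let the lag of a
zombie be its additional distance to the survivor, compared with the foremost ones. A zombie with
lag `1, …, 4` cuts off the circle during the first lap; the survivor must then move on to
`T_{x+1}`, with every positive lag reduced by one.

Zombies therefore win on an arm if their lags increase from `0` in steps of at most four up to the
number of copies in the arm: every copy then finds a zombie with lag `1, …, 4`. They obtain such
lags by starting with `k` of them at a vertex of the base graph and the other `m - k` at spacing
four along the path attached to it. Fewer than `m` zombies leave some arm at each vertex empty. Once
`k` of them have lag at most three, the others, fewer than `m - k`, cannot chase the survivor
through all `4 * (m - k)` copies of the empty arm.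

On the base graph, `k` pursuers gathered at one vertex intercept an evader at distance two, unless
it is on a path or an arm, whereas fewer than `k` pursuers can be evaded forever. For a block
intersection graph the latter is a count of the blocks through a point.
-/

/-! ### Moves, cuts and strategies -/

section Graph

variable {V : Type*} {G : SimpleGraph V}

/-- The moves of a player who may stay in place: `v` is `u` or a neighbour of `u`. The disjunction
is oriented as in `RobberLegal` and `CopStepLegal`. -/
def AdjOrEq (G : SimpleGraph V) (u v : V) : Prop := v = u ∨ G.Adj u v

theorem AdjOrEq.refl (u : V) : AdjOrEq G u u := Or.inl rfl

theorem AdjOrEq.symm {u v : V} (h : AdjOrEq G u v) : AdjOrEq G v u := h.imp Eq.symm Adj.symm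

theorem adjOrEq_iff_dist_le_one (hG : G.Connected) {u v : V} :
    AdjOrEq G u v ↔ G.dist u v ≤ 1 := by
  rw [AdjOrEq, Nat.le_one_iff_eq_zero_or_eq_one, dist_eq_one_iff_adj, hG.dist_eq_zero_iff, eq_comm]

theorem AdjOrEq.dist_le (hG : G.Connected) {u v : V} (h : AdjOrEq G u v) (s : V) :
    G.dist u s ≤ G.dist v s + 1 := by
  have := (adjOrEq_iff_dist_le_one hG).1 h
  have := hG.dist_triangle (u := u) (v := v) (w := s)
  omega

theorem le_add_dist_of_adj_le (hG : G.Connected) {f : V → ℕ}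
    (hf : ∀ u v, G.Adj u v → f u ≤ f v + 1) (u v : V) : f u ≤ f v + G.dist u v := by
  obtain ⟨w, hw⟩ := hG.exists_walk_length_eq_dist u v
  rw [← hw]
  clear hw
  induction w with
  | nil => simp
  | cons hadj p ih =>
    have := hf _ _ hadj
    rw [Walk.length_cons]
    omega

/-- One zombie moving from `z` to `z'` while the survivor stands at `s`. -/
def IsZombieMove (G : SimpleGraph V) (z s z' : V) : Prop :=
  G.Adj z z' ∧ G.dist z' s < G.dist z s

/-- One cop moving from `z` to `z'`; the robber's position is irrelevant and only recorded to match
the shape of `IsZombieMove`. -/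
def IsCopMove (G : SimpleGraph V) (z _s z' : V) : Prop := AdjOrEq G z z'

theorem IsZombieMove.isCopMove {z s z' : V} (h : IsZombieMove G z s z') : IsCopMove G z s z' :=
  Or.inr h.1

theorem IsZombieMove.dist_add_one (hG : G.Connected) {z s z' : V} (h : IsZombieMove G z s z') :
    G.dist z' s + 1 = G.dist z s := by
  have := h.2
  have := AdjOrEq.dist_le hG (Or.inr h.1) s
  omega

theorem exists_isZombieMove (hG : G.Connected) {z s : V} (h : z ≠ s) :
    ∃ u, IsZombieMove G z s u := by
  obtain ⟨w, hw⟩ := hG.exists_walk_length_eq_dist z s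
  cases w with
  | nil => exact absurd rfl h
  | @cons _ u _ hadj p =>
    rw [Walk.length_cons] at hw
    exact ⟨u, hadj, by have := dist_le p; omega⟩

theorem isZombieMove_of_adj_of_adjOrEq (hG : G.Connected) {z s u : V} (hzu : G.Adj z u)
    (hus : AdjOrEq G u s) (hzs : ¬ AdjOrEq G z s) : IsZombieMove G z s u := by
  rw [adjOrEq_iff_dist_le_one hG] at hus hzs
  exact ⟨hzu, by omega⟩

theorem isZombieMove_of_adj (hG : G.Connected) {z s : V} (h : G.Adj z s) :
    IsZombieMove G z s s := by
  refine ⟨h, ?_⟩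
  simpa using hG.pos_dist_of_ne h.ne

/-- Every walk leaving `S` passes through `c`. -/
def IsCut (G : SimpleGraph V) (S : Set V) (c : V) : Prop :=
  ∀ ⦃u v⦄, u ∈ S → v ∉ S → G.Adj u v → u = c

namespace IsCut

variable {S : Set V} {c u u' s : V}

theorem dist_eq (h : IsCut G S c) (hG : G.Connected) (hu : u ∈ S) (hs : s ∉ S) :
    G.dist u s = G.dist u c + G.dist c s := by
  classical
  refine le_antisymm hG.dist_triangle ?_
  have lipschitz : ∀ a b, G.Adj a b →
      (if a ∈ S then G.dist a c + G.dist c s else G.dist a s) ≤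
        (if b ∈ S then G.dist b c + G.dist c s else G.dist b s) + 1 := by
    intro a b hab
    have hc := AdjOrEq.dist_le hG (Or.inr hab) c
    have hs := AdjOrEq.dist_le hG (Or.inr hab) s
    by_cases ha : a ∈ S <;> by_cases hb : b ∈ S <;> simp only [ha, hb, if_true, if_false]
    · omega
    · obtain rfl := h ha hb hab
      simpa using hs
    · obtain rfl := h hb ha hab.symm
      simpa using hs
    · exact hs
  simpa [hu, hs] using le_add_dist_of_adj_le hG lipschitz u s

theorem mem_of_isZombieMove (h : IsCut G S c) (hu : u ∈ S) (hm : IsZombieMove G u s u')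
    (huc : u ≠ c) : u' ∈ S := by
  by_contra hu'
  exact huc (h hu hu' hm.1)

theorem isZombieMove (h : IsCut G S c) (hG : G.Connected) (hu : u ∈ S) (hu' : u' ∈ S)
    (hs : s ∉ S) (hm : IsZombieMove G u c u') : IsZombieMove G u s u' := by
  refine ⟨hm.1, ?_⟩
  rw [h.dist_eq hG hu hs, h.dist_eq hG hu' hs]
  exact Nat.add_lt_add_right hm.2 _

end IsCut

end Graph

section Game

variable {V : Type*} {G : SimpleGraph V} {L : V → V → V → Prop} {J : ℕ} {z : Fin J → V} {s : V}

/-- The positions, with the pursuers to move, from which the pursuers can force a capture.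
`L z s z'` says that a pursuer at `z` may move to `z'` when the evader is at `s`. -/
inductive PursuersWin (G : SimpleGraph V) (L : V → V → V → Prop) {J : ℕ} :
    (Fin J → V) → V → Prop
  | caught {z : Fin J → V} {s : V} (i : Fin J) : z i = s → PursuersWin G L z s
  | capture {z : Fin J → V} {s : V} (z' : Fin J → V) (i : Fin J) :
      (∀ j, L (z j) s (z' j)) → z' i = s → PursuersWin G L z s
  | move {z : Fin J → V} {s : V} (z' : Fin J → V) :
      (∀ j, L (z j) s (z' j)) → (∀ s', AdjOrEq G s s' → PursuersWin G L z' s') →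
      PursuersWin G L z s

/-- The strategy `mv` captures the evader in every play starting at `z`, `s`, all moves up to the
capture obeying the rule `L`. -/
def CatchesFrom (G : SimpleGraph V) (L : V → V → V → Prop) (z : Fin J → V) (s : V)
    (mv : GameHist V J → Fin J → V) : Prop :=
  ∀ (c : ℕ → Fin J → V) (r : ℕ → V), c 0 = z → r 0 = s → FollowsStrat mv c r →
    RobberLegal G r →
    ∃ n, ((∃ i, c n i = r n) ∧ ∀ m < n, ∀ i, L (c m i) (r m) (c (m + 1) i)) ∨
      ((∃ i, c (n + 1) i = r n) ∧ ∀ m ≤ n, ∀ i, L (c m i) (r m) (c (m + 1) i))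

theorem histUpTo_succ (c : ℕ → Fin J → V) (r : ℕ → V) (n : ℕ) :
    histUpTo c r (n + 1) = histUpTo c r n ++ [(c n, r n)] := by
  simp [histUpTo, List.range_succ]

theorem histUpTo_succ_eq_cons (c : ℕ → Fin J → V) (r : ℕ → V) (n : ℕ) :
    histUpTo c r (n + 1) =
      (c 0, r 0) :: histUpTo (fun i => c (i + 1)) (fun i => r (i + 1)) n := by
  simp [histUpTo, List.range_succ_eq_map, Function.comp_def]

/-- The strategy that first moves to `z'` and then, once the evader has answered by moving to `s'`,
plays `mvs s'` as if the game had started at that moment. -/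
def moveThen (z' : Fin J → V) (mvs : V → GameHist V J → Fin J → V) :
    GameHist V J → Fin J → V
  | _ :: x :: t => mvs x.2 (x :: t)
  | _ => z'

theorem CatchesFrom.moveThen {z' : Fin J → V} {mvs : V → GameHist V J → Fin J → V}
    (hL : ∀ j, L (z j) s (z' j))
    (h : ∀ s', AdjOrEq G s s' → CatchesFrom G L z' s' (mvs s')) :
    CatchesFrom G L z s (moveThen z' mvs) := by
  intro c r hc hr hf hrl
  have hc1 : c 1 = z' := hf 0
  have first : ∀ i, L (c 0 i) (r 0) (c 1 i) := by rwa [hc, hr, hc1]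
  have tail_follows : FollowsStrat (mvs (r 1)) (fun i => c (i + 1)) (fun i => r (i + 1)) := by
    intro n
    have := hf (n + 1)
    rw [histUpTo_succ_eq_cons, histUpTo_succ_eq_cons] at this
    rw [histUpTo_succ_eq_cons]
    exact this
  obtain ⟨n, ⟨hn, hm⟩ | ⟨hn, hm⟩⟩ :=
    h (r 1) (hr ▸ hrl 0) _ _ hc1 rfl tail_follows (fun n => hrl (n + 1))
  · exact ⟨n + 1, Or.inl ⟨hn, Nat.forall_lt_succ_left.2 ⟨first, hm⟩⟩⟩
  · refine ⟨n + 1, Or.inr ⟨hn, fun m hmn => ?_⟩⟩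
    cases m with
    | zero => exact first
    | succ m => exact hm m (by omega)

theorem PursuersWin.exists_catchesFrom (h : PursuersWin G L z s) :
    ∃ mv, CatchesFrom G L z s mv := by
  induction h with
  | @caught z s i hi =>
    exact ⟨fun _ => z, fun c r hc hr _ _ => ⟨0, Or.inl ⟨⟨i, by rw [hc, hr, hi]⟩, by simp⟩⟩⟩
  | @capture z s z' i hl hi =>
    refine ⟨fun _ => z', fun c r hc hr hf _ => ⟨0, Or.inr ⟨⟨i, by rw [hf 0, hr]; exact hi⟩, ?_⟩⟩⟩
    intro m hm j
    obtain rfl : m = 0 := by omega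
    rw [hf 0, hr, hc]
    exact hl j
  | @move z s z' hl _ ih =>
    choose! mvs hmvs using ih
    exact ⟨moveThen z' mvs, .moveThen hl hmvs⟩

theorem copsWinWith_of_pursuersWin (z : Fin J → V)
    (h : ∀ s, PursuersWin G (IsCopMove G) z s) : CopsWinWith G J := by
  choose mvs hmvs using fun s => (h s).exists_catchesFrom
  refine ⟨z, fun
      | x :: t => mvs x.2 (x :: t)
      | [] => z, fun c r hc hf hr => hmvs (r 0) c r hc rfl (fun n => ?_) hr⟩
  have := hf n
  rw [histUpTo_succ_eq_cons] at this ⊢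
  exact this

theorem zombiesWinWith_of_pursuersWin (z : Fin J → V)
    (h : ∀ s, PursuersWin G (IsZombieMove G) z s) : ZombiesWinWith G J :=
  ⟨z, fun s => (h s).exists_catchesFrom⟩

/-- A family of positions, with the pursuers to move, which the evader can maintain forever against
pursuers moving according to `L`, no pursuer ever being next to the evader on the pursuers' turn. -/
structure IsEvasionInvariant (G : SimpleGraph V) (L : V → V → V → Prop)
    (Inv : (Fin J → V) → V → Prop) : Prop where
  safe : ∀ ⦃z s⦄, Inv z s → ∀ i, ¬ AdjOrEq G (z i) s
  respond : ∀ ⦃z s z'⦄, Inv z s → (∀ i, L (z i) s (z' i)) → ∃ s', AdjOrEq G s s' ∧ Inv z' s'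

theorem exists_play (mv : GameHist V J → Fin J → V)
    (f : (Fin J → V) → V → (Fin J → V) → V) (z : Fin J → V) (s : V) :
    ∃ (c : ℕ → Fin J → V) (r : ℕ → V), c 0 = z ∧ r 0 = s ∧ FollowsStrat mv c r ∧
      ∀ n, r (n + 1) = f (c n) (r n) (c (n + 1)) := by
  let next : GameHist V J × (Fin J → V) × V → GameHist V J × (Fin J → V) × V := fun q =>
    (q.1 ++ [q.2], mv (q.1 ++ [q.2]), f q.2.1 q.2.2 (mv (q.1 ++ [q.2])))
  let state : ℕ → GameHist V J × (Fin J → V) × V := fun n => next^[n] ([], z, s)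
  have state_succ : ∀ n, state (n + 1) = next (state n) := fun n =>
    Function.iterate_succ_apply' next n _
  let c : ℕ → Fin J → V := fun n => (state n).2.1
  let r : ℕ → V := fun n => (state n).2.2
  have hist : ∀ n, (state n).1 = histUpTo c r n := by
    intro n
    induction n with
    | zero => rfl
    | succ n ih => rw [histUpTo_succ, ← ih, state_succ]
  refine ⟨c, r, rfl, rfl, fun n => ?_, fun n => ?_⟩
  · rw [histUpTo_succ, ← hist]
    exact congrArg (·.2.1) (state_succ n)
  · change (state (n + 1)).2.2 = f (state n).2.1 (state n).2.2 (state (n + 1)).2.1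
    rw [state_succ]

theorem IsEvasionInvariant.exists_response {Inv : (Fin J → V) → V → Prop}
    (h : IsEvasionInvariant G L Inv) :
    ∃ f : (Fin J → V) → V → (Fin J → V) → V, (∀ z s z', AdjOrEq G s (f z s z')) ∧
      ∀ z s z', Inv z s → (∀ i, L (z i) s (z' i)) → Inv z' (f z s z') := by
  have (z : Fin J → V) (s : V) (z' : Fin J → V) :
      ∃ s', AdjOrEq G s s' ∧ (Inv z s → (∀ i, L (z i) s (z' i)) → Inv z' s') := by
    by_cases hz : Inv z s ∧ ∀ i, L (z i) s (z' i)
    · obtain ⟨s', hs', hinv⟩ := h.respond hz.1 hz.2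
      exact ⟨s', hs', fun _ _ => hinv⟩
    · exact ⟨s, .refl s, fun hi hl => absurd ⟨hi, hl⟩ hz⟩
  choose f hf using this
  exact ⟨f, fun z s z' => (hf z s z').1, fun z s z' => (hf z s z').2⟩

theorem IsEvasionInvariant.not_catchesFrom {Inv : (Fin J → V) → V → Prop}
    (h : IsEvasionInvariant G L Inv) (hL : ∀ ⦃z s z'⦄, L z s z' → AdjOrEq G z z')
    (h0 : Inv z s) (mv : GameHist V J → Fin J → V) : ¬ CatchesFrom G L z s mv := by
  intro hcatch
  obtain ⟨f, hf_adj, hf_inv⟩ := h.exists_response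
  obtain ⟨c, r, hc, hr, hfol, hr_succ⟩ := exists_play mv f z s
  have hinv : ∀ n, (∀ m < n, ∀ i, L (c m i) (r m) (c (m + 1) i)) → Inv (c n) (r n) := by
    intro n
    induction n with
    | zero => rwa [hc, hr, imp_iff_right (by simp)]
    | succ n ih =>
      intro hm
      rw [hr_succ]
      exact hf_inv _ _ _ (ih fun m hmn => hm m (by omega)) (hm n (by omega))
  have hlegal : RobberLegal G r := fun n => by rw [hr_succ]; exact hf_adj _ _ _
  obtain ⟨n, ⟨⟨i, hi⟩, hm⟩ | ⟨⟨i, hi⟩, hm⟩⟩ := hcatch c r hc hr hfol hlegal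
  · exact h.safe (hinv n hm) i (hi ▸ .refl _)
  · exact h.safe (hinv n fun m hmn => hm m hmn.le) i (hi ▸ hL (hm n le_rfl i))

theorem IsEvasionInvariant.not_copsWinWith {Inv : (Fin J → V) → V → Prop}
    (h : IsEvasionInvariant G (IsCopMove G) Inv) (h0 : ∀ z, ∃ s, Inv z s) :
    ¬ CopsWinWith G J := by
  rintro ⟨z, mv, hmv⟩
  obtain ⟨s, hs⟩ := h0 z
  exact h.not_catchesFrom (fun _ _ _ => id) hs mv fun c r hc _ hf hr => hmv c r hc hf hr

theorem IsEvasionInvariant.not_zombiesWinWith {Inv : (Fin J → V) → V → Prop}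
    (h : IsEvasionInvariant G (IsZombieMove G) Inv) (h0 : ∀ z, ∃ s, Inv z s) :
    ¬ ZombiesWinWith G J := by
  rintro ⟨z, hz⟩
  obtain ⟨s, hs⟩ := h0 z
  obtain ⟨mv, hmv⟩ := hz s
  exact h.not_catchesFrom (fun _ _ _ => IsZombieMove.isCopMove) hs mv hmv

end Game

section PursuitTools

variable {V : Type*} {G : SimpleGraph V} {L : V → V → V → Prop} {J : ℕ} {z : Fin J → V} {s : V}

theorem exists_forall_isZombieMove (hG : G.Connected) (hz : ∀ i, z i ≠ s) {P : Fin J → Prop}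
    {u : Fin J → V} (hu : ∀ i, P i → IsZombieMove G (z i) s (u i)) :
    ∃ z' : Fin J → V, (∀ i, IsZombieMove G (z i) s (z' i)) ∧ ∀ i, P i → z' i = u i := by
  have (i : Fin J) : ∃ v, IsZombieMove G (z i) s v ∧ (P i → v = u i) := by
    by_cases hi : P i
    · exact ⟨u i, hu i hi, fun _ => rfl⟩
    · exact (exists_isZombieMove hG (hz i)).imp fun v hv => ⟨hv, fun h => absurd h hi⟩
  choose z' hz' hz'u using this
  exact ⟨z', hz', hz'u⟩

theorem PursuersWin.of_adjOrEq (hG : G.Connected)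
    (hL : ∀ ⦃z s z'⦄, IsZombieMove G z s z' → L z s z') {i : Fin J}
    (hi : AdjOrEq G (z i) s) : PursuersWin G L z s := by
  by_cases hc : ∃ i, z i = s
  · exact hc.elim .caught
  push Not at hc
  have hadj := hi.resolve_left (hc i).symm
  obtain ⟨z', hz', hz'i⟩ := exists_forall_isZombieMove hG hc (P := (· = i)) (u := fun _ => s)
    (by rintro _ rfl; exact isZombieMove_of_adj hG hadj)
  exact .capture z' i (fun j => hL (hz' j)) (hz'i i rfl)

theorem PursuersWin.of_isZombieMove (hG : G.Connected)
    (hL : ∀ ⦃z s z'⦄, IsZombieMove G z s z' → L z s z') (P : Fin J → Prop) (u : Fin J → V)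
    (hu : ∀ i, P i → IsZombieMove G (z i) s (u i))
    (hwin : ∀ z' : Fin J → V, (∀ i, IsZombieMove G (z i) s (z' i)) → (∀ i, P i → z' i = u i) →
      ∀ s', AdjOrEq G s s' → (∀ i, ¬ AdjOrEq G (z' i) s') → PursuersWin G L z' s') :
    PursuersWin G L z s := by
  by_cases hc : ∃ i, z i = s
  · exact hc.elim .caught
  push Not at hc
  obtain ⟨z', hz', hz'u⟩ := exists_forall_isZombieMove hG hc hu
  refine .move z' (fun i => hL (hz' i)) fun s' hs' => ?_
  by_cases h : ∃ i, AdjOrEq G (z' i) s'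
  · exact h.elim fun i hi => .of_adjOrEq hG hL hi
  · exact hwin z' hz' hz'u s' hs' (not_exists.1 h)

theorem PursuersWin.of_cop_move (i : Fin J) {u : V} (hu : AdjOrEq G (z i) u)
    (hwin : ∀ s', AdjOrEq G s s' → PursuersWin G (IsCopMove G) (Function.update z i u) s') :
    PursuersWin G (IsCopMove G) z s := by
  refine .move (Function.update z i u) (fun j => ?_) hwin
  obtain rfl | hj := eq_or_ne j i
  · simpa [IsCopMove] using hu
  · simpa [IsCopMove, hj] using .refl (z j)

end PursuitTools

/-! ### Base graphs -/

section PursuitBase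

variable {W W' : Type*} {H : SimpleGraph W} {H' : SimpleGraph W'} {k : ℕ}

/-- The two properties of the base graph on which `k` cops and fewer than `k` cops rely. Against a
robber at distance at least two, `k` cops gathered at one vertex have a joint step after which the
robber cannot avoid being next to one of them. A robber attacked by a set `S` of fewer than `k` cops
has a step after which no cop is next to it, apart from the cops it has just left. -/
structure IsPursuitBase (H : SimpleGraph W) (k : ℕ) : Prop where
  nonempty : Nonempty W
  intercept : ∀ ⦃v w⦄, ¬ AdjOrEq H v w → ∃ f : Fin k → W, (∀ i, H.Adj v (f i) ∧ H.Adj (f i) w) ∧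
    ∀ w', AdjOrEq H w w' → ∃ i, AdjOrEq H (f i) w'
  escape : ∀ (S : Finset W) (b : W), S.card < k → ∃ b', AdjOrEq H b b' ∧ (b ∈ S → b' ≠ b) ∧
    ∀ u ∈ S, u ≠ b → ¬ AdjOrEq H u b'

theorem IsPursuitBase.exists_forall_not_adjOrEq (h : IsPursuitBase H k) {S : Finset W}
    (hS : S.card < k) : ∃ b, ∀ u ∈ S, ¬ AdjOrEq H u b := by
  have := h.nonempty
  obtain ⟨b, hb⟩ : ∃ b, b ∉ S := by
    obtain rfl | ⟨b, hb⟩ := S.eq_empty_or_nonempty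
    · exact ⟨Classical.arbitrary W, by simp⟩
    · obtain ⟨b', -, hbb', hb'⟩ := h.escape S b hS
      exact ⟨b', fun hmem => hb' b' hmem (hbb' hb) (.refl b')⟩
  obtain ⟨b', -, -, hb'⟩ := h.escape S b hS
  exact ⟨b', fun u hu => hb' u hu (ne_of_mem_of_not_mem hu hb)⟩

theorem IsPursuitBase.connected (h : IsPursuitBase H k) (hk : 1 ≤ k) : H.Connected := by
  have := h.nonempty
  refine ⟨fun u w => ?_⟩
  by_cases huw : AdjOrEq H u w
  · exact huw.elim (fun h => h ▸ .refl _) Adj.reachable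
  · obtain ⟨f, hf, -⟩ := h.intercept huw
    exact (hf ⟨0, hk⟩).1.reachable.trans (hf ⟨0, hk⟩).2.reachable

theorem adjOrEq_map_iff (e : H ≃g H') {u w : W} : AdjOrEq H' (e u) (e w) ↔ AdjOrEq H u w := by
  simp only [AdjOrEq, e.map_adj_iff, e.injective.eq_iff]

theorem IsPursuitBase.of_iso (h : IsPursuitBase H' k) (e : H ≃g H') : IsPursuitBase H k where
  nonempty := h.nonempty.map e.symm
  intercept v w hvw := by
    obtain ⟨f, hf, hcover⟩ := h.intercept (mt (adjOrEq_map_iff e).1 hvw)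
    refine ⟨fun i => e.symm (f i), fun i => ?_, fun w' hw' => ?_⟩
    · simpa [← e.map_adj_iff] using hf i
    · simpa [← adjOrEq_map_iff e] using hcover (e w') ((adjOrEq_map_iff e).2 hw')
  escape S b hS := by
    obtain ⟨b', hb', hb, hSb'⟩ := h.escape (S.map e.toEquiv.toEmbedding) (e b) (by simpa using hS)
    refine ⟨e.symm b', ?_, fun hbS h => ?_, fun u hu hub => ?_⟩
    · simpa [← adjOrEq_map_iff e] using hb'
    · exact hb (Finset.mem_map_of_mem _ hbS) (by simp [← h])
    · simpa [← adjOrEq_map_iff e] using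
        hSb' (e u) (Finset.mem_map_of_mem _ hu) (e.injective.ne hub)

theorem isPursuitBase_one_of_subsingleton [Subsingleton W] [Nonempty W] (H : SimpleGraph W) :
    IsPursuitBase H 1 where
  nonempty := inferInstance
  intercept v w hvw := absurd (Or.inl (Subsingleton.elim w v)) hvw
  escape S b hS := by
    obtain rfl := Finset.card_eq_zero.1 (Nat.lt_one_iff.1 hS)
    exact ⟨b, .refl b, by simp, by simp⟩

end PursuitBase

namespace IsBIBD

variable {P : Type*} {B : Finset (Finset P)} {v k : ℕ}

theorem exists_block (h : IsBIBD P B v k) {p q : P} (hpq : p ≠ q) :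
    ∃ b ∈ B, p ∈ b ∧ q ∈ b := by
  obtain ⟨b, ⟨hb, hp, hq⟩, -⟩ := h.2.2 p q hpq
  exact ⟨b, hb, hp, hq⟩

theorem block_eq (h : IsBIBD P B v k) {p q : P} (hpq : p ≠ q) {b b' : Finset P} (hb : b ∈ B)
    (hb' : b' ∈ B) (hp : p ∈ b) (hq : q ∈ b) (hp' : p ∈ b') (hq' : q ∈ b') : b = b' :=
  (h.2.2 p q hpq).unique ⟨hb, hp, hq⟩ ⟨hb', hp', hq'⟩

theorem block_nonempty (h : IsBIBD P B v k) (hk : 1 ≤ k) {b : Finset P} (hb : b ∈ B) :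
    b.Nonempty := by
  rw [← Finset.card_pos, h.2.1 b hb]
  omega

theorem adjOrEq_blockGraph_iff (h : IsBIBD P B v k) (hk : 1 ≤ k) {b b' : {b // b ∈ B}} :
    AdjOrEq (blockGraph B) b b' ↔ ∃ p, p ∈ b.1 ∧ p ∈ b'.1 := by
  simp only [AdjOrEq, blockGraph, fromRel_adj]
  constructor
  · rintro (rfl | ⟨-, ⟨p, hp⟩ | ⟨p, hp⟩⟩)
    · exact (h.block_nonempty hk b'.2).imp fun p hp => ⟨hp, hp⟩
    · exact ⟨p, hp⟩
    · exact ⟨p, hp.symm⟩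
  · intro hp
    exact or_iff_not_imp_left.2 fun hne => ⟨Ne.symm hne, Or.inl hp⟩

theorem exists_point_notMem (h : IsBIBD P B v k) {b : Finset P} (hb : b ∈ B)
    {S : Finset (Finset P)} (hSB : S ⊆ B) (hS : S.card < k) :
    ∃ p ∈ b, ∀ u ∈ S, u ≠ b → p ∉ u := by
  classical
  by_contra! hcon
  have hsub : b ⊆ (S.erase b).biUnion fun u => u ∩ b := by
    intro p hp
    obtain ⟨u, hu, hub, hpu⟩ := hcon p hp
    simpa using ⟨u, ⟨hub, hu⟩, hpu, hp⟩
  have hinter : ∀ u ∈ S.erase b, (u ∩ b).card ≤ 1 := by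
    intro u hu
    obtain ⟨hub, hu⟩ := Finset.mem_erase.1 hu
    rw [Finset.card_le_one]
    intro x hx y hy
    by_contra hxy
    simp only [Finset.mem_inter] at hx hy
    exact hub (h.block_eq hxy (hSB hu) hb hx.1 hy.1 hx.2 hy.2)
  have := Finset.card_le_card hsub
  have := Finset.card_biUnion_le_card_mul _ _ 1 hinter
  have := Finset.card_erase_le (s := S) (a := b)
  have := h.2.1 b hb
  omega

/-- A block of `S` with a point `q ≠ p` rules out at most the other points of the block through `p`
and `q`, hence at most `k * (k - 1)` points in all. -/
theorem exists_block_meeting_only_at (h : IsBIBD P B v k) (hv : k * (k - 1) ^ 2 + 1 < v)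
    (p : P) {S : Finset (Finset P)} (hSB : S ⊆ B) (hS : S.card < k) :
    ∃ b ∈ B, p ∈ b ∧ ∀ u ∈ S, ∀ q ∈ u, q ∈ b → q = p := by
  classical
  choose! line hline hleft hright using fun p q (hpq : p ≠ q) => h.exists_block hpq
  let bad (u : Finset P) : Finset P := (u.erase p).biUnion fun q => (line p q).erase p
  have hbad : ∀ u ∈ S, (bad u).card ≤ k * (k - 1) := by
    intro u hu
    refine (Finset.card_biUnion_le_card_mul _ _ (k - 1) fun q hq => ?_).trans
      (Nat.mul_le_mul_right _ ((Finset.card_erase_le).trans_eq (h.2.1 u (hSB hu))))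
    have hpq := (Finset.ne_of_mem_erase hq).symm
    rw [Finset.card_erase_of_mem (hleft p q hpq), h.2.1 _ (hline p q hpq)]
  have hlt : (insert p (S.biUnion bad)).card < Nat.card P :=
    calc (insert p (S.biUnion bad)).card
        ≤ S.card * (k * (k - 1)) + 1 := (Finset.card_insert_le _ _).trans
          (Nat.succ_le_succ (Finset.card_biUnion_le_card_mul S bad _ hbad))
      _ ≤ (k - 1) * (k * (k - 1)) + 1 := by gcongr; omega
      _ = k * (k - 1) ^ 2 + 1 := by ring
      _ < Nat.card P := h.1 ▸ hv
  have : Finite P := Nat.finite_of_card_ne_zero (by omega)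
  have := Fintype.ofFinite P
  obtain ⟨q, hq⟩ : ∃ q, q ∉ insert p (S.biUnion bad) := by
    rw [Nat.card_eq_fintype_card] at hlt
    exact Finset.exists_mem_notMem_of_card_lt_card (t := .univ) hlt |>.imp fun _ => And.right
  obtain ⟨hqp, hq⟩ : q ≠ p ∧ ∀ u ∈ S, q ∉ bad u := by simpa using hq
  refine ⟨line p q, hline p q hqp.symm, hleft p q hqp.symm, fun u hu r hru hr => ?_⟩
  by_contra hrp
  have heq : line p r = line p q := h.block_eq (Ne.symm hrp) (hline p r (Ne.symm hrp))
    (hline p q hqp.symm) (hleft p r (Ne.symm hrp)) (hright p r (Ne.symm hrp))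
    (hleft p q hqp.symm) hr
  exact hq u hu (Finset.mem_biUnion.2 ⟨r, Finset.mem_erase.2 ⟨hrp, hru⟩,
    Finset.mem_erase.2 ⟨hqp, heq ▸ hright p q hqp.symm⟩⟩)

theorem blockGraph_escape (h : IsBIBD P B v k) (hk : 2 ≤ k) (hv : k * (k - 1) ^ 2 + 1 < v)
    (S : Finset {b // b ∈ B}) (b : {b // b ∈ B}) (hS : S.card < k) :
    ∃ b', AdjOrEq (blockGraph B) b b' ∧ (b ∈ S → b' ≠ b) ∧
      ∀ u ∈ S, u ≠ b → ¬ AdjOrEq (blockGraph B) u b' := by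
  have hSB : S.map (Function.Embedding.subtype _) ⊆ B := fun u hu => by
    obtain ⟨u, -, rfl⟩ := Finset.mem_map.1 hu
    exact u.2
  have mem_map : ∀ u ∈ S, u.1 ∈ S.map (Function.Embedding.subtype _) := fun u =>
    Finset.mem_map_of_mem (Function.Embedding.subtype _)
  obtain ⟨p, hpb, hpS⟩ := h.exists_point_notMem b.2 hSB (by simpa using hS)
  obtain ⟨b', hb', hpb', hmeet⟩ := h.exists_block_meeting_only_at hv p hSB (by simpa using hS)
  simp only [h.adjOrEq_blockGraph_iff (by omega : 1 ≤ k)]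
  refine ⟨⟨b', hb'⟩, ⟨p, hpb, hpb'⟩, ?_, ?_⟩
  · rintro hbS rfl
    have hle : b'.card ≤ ({p} : Finset P).card :=
      Finset.card_le_card fun q hq => Finset.mem_singleton.2 (hmeet b' (mem_map _ hbS) q hq hq)
    rw [h.2.1 b' hb', Finset.card_singleton] at hle
    omega
  · rintro u hu hub ⟨q, hqu, hqb'⟩
    obtain rfl := hmeet u.1 (mem_map _ hu) q hqu hqb'
    exact hpS u.1 (mem_map _ hu) (Subtype.coe_injective.ne hub) hqu

theorem blockGraph_intercept (h : IsBIBD P B v k) (hk : 1 ≤ k) {b b' : {b // b ∈ B}}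
    (hbb' : ¬ AdjOrEq (blockGraph B) b b') :
    ∃ f : Fin k → {b // b ∈ B},
      (∀ i, (blockGraph B).Adj b (f i) ∧ (blockGraph B).Adj (f i) b') ∧
      ∀ c, AdjOrEq (blockGraph B) b' c → ∃ i, AdjOrEq (blockGraph B) (f i) c := by
  obtain ⟨q, hq⟩ := h.block_nonempty hk b.2
  let e := b'.1.equivFinOfCardEq (h.2.1 _ b'.2)
  have disjoint : ∀ p, p ∈ b.1 → p ∉ b'.1 := by
    simpa [h.adjOrEq_blockGraph_iff hk] using hbb'
  have hne (i : Fin k) : q ≠ (e.symm i).1 := fun hqi => disjoint q hq (hqi ▸ (e.symm i).2)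
  choose line hline hleft hright using fun i => h.exists_block (hne i)
  have hadj {c c' : {b // b ∈ B}} (hp : ∃ p, p ∈ c.1 ∧ p ∈ c'.1) (hcc' : c ≠ c') :
      (blockGraph B).Adj c c' :=
    ((h.adjOrEq_blockGraph_iff hk).2 hp).resolve_left (Ne.symm hcc')
  refine ⟨fun i => ⟨line i, hline i⟩, fun i => ⟨hadj ⟨q, hq, hleft i⟩ ?_,
    hadj ⟨_, hright i, (e.symm i).2⟩ ?_⟩, fun c hc => ?_⟩
  · rintro rfl
    exact disjoint _ (hright i) (e.symm i).2
  · rintro rfl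
    exact disjoint q hq (hleft i)
  · obtain ⟨p, hpb', hpc⟩ := (h.adjOrEq_blockGraph_iff hk).1 hc
    refine ⟨e ⟨p, hpb'⟩, (h.adjOrEq_blockGraph_iff hk).2 ⟨p, ?_, hpc⟩⟩
    simpa using hright (e ⟨p, hpb'⟩)

theorem isPursuitBase_blockGraph (h : IsBIBD P B v k) (hk : 2 ≤ k)
    (hv : k * (k - 1) ^ 2 + 1 < v) : IsPursuitBase (blockGraph B) k where
  nonempty := by
    have hcard : 1 < Nat.card P := by rw [h.1]; omega
    have : Finite P := Nat.finite_of_card_ne_zero (by omega)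
    have : Nontrivial P := Finite.one_lt_card_iff_nontrivial.1 hcard
    obtain ⟨p, q, hpq⟩ := exists_pair_ne P
    obtain ⟨b, hb, -⟩ := h.exists_block hpq
    exact ⟨⟨b, hb⟩⟩
  intercept _ _ := h.blockGraph_intercept (by omega)
  escape := h.blockGraph_escape hk hv

end IsBIBD

/-! ### Arms -/

section ArmGraph

variable {n : ℕ}

instance : DecidableRel fin5adj := fun i j => by unfold fin5adj; infer_instance

/-- `i` and `j` are equal or cyclically consecutive. -/
def Fin5Near (i j : Fin 5) : Prop := i = j ∨ fin5adj i j

instance : DecidableRel Fin5Near := fun i j => by unfold Fin5Near; infer_instance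

theorem fin5adj_comm : ∀ {i j}, fin5adj i j ↔ fin5adj j i := or_comm

theorem not_fin5adj_self (i : Fin 5) : ¬ fin5adj i i := by decide +revert

theorem fin5Near_comm {i j : Fin 5} : Fin5Near i j ↔ Fin5Near j i := by decide +revert

theorem exists_fin5adj_fin5Near (i j : Fin 5) : ∃ l, fin5adj i l ∧ Fin5Near l j := by
  decide +revert

theorem b0_of_lt {x : ℕ} (h : x < n) : b0 n x = .outer ⟨x, h⟩ 0 := dif_pos h

theorem b0_self : b0 n n = .finish := dif_neg (lt_irrefl n)

theorem b2prev_zero : b2prev n 0 = .start := dif_neg (by simp)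

theorem b2prev_succ {x : ℕ} (h : x < n) : b2prev n (x + 1) = .outer ⟨x, h⟩ 2 :=
  dif_pos ⟨by omega, h⟩

namespace ArmVert

theorem adj_inner_iff {x : Fin n} {i : Fin 5} {t : ArmVert n} :
    (armGraph n).Adj (.inner x i) t ↔ (∃ j, fin5adj i j ∧ t = .inner x j) ∨
      (∃ j, Fin5Near i j ∧ t = .outer x j) ∨ t = .center x := by
  cases t <;> grind [armGraph, fromRel_adj, armRel, Fin5Near, not_fin5adj_self, fin5adj_comm]

theorem adj_outer_iff {x : Fin n} {i : Fin 5} {t : ArmVert n} :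
    (armGraph n).Adj (.outer x i) t ↔ (∃ j, Fin5Near i j ∧ t = .inner x j) ∨
      (∃ j, fin5adj i j ∧ t = .outer x j) ∨ (i = 0 ∧ t = b2prev n x) ∨
      (i = 2 ∧ t = b0 n (x + 1)) := by
  cases t <;> grind [armGraph, fromRel_adj, armRel, Fin5Near, fin5Near_comm, not_fin5adj_self,
    fin5adj_comm, b0, b2prev]

theorem adj_center_iff {x : Fin n} {t : ArmVert n} :
    (armGraph n).Adj (.center x) t ↔ ∃ j, t = .inner x j := by
  cases t <;> grind [armGraph, fromRel_adj, armRel]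

theorem adj_start_iff {t : ArmVert n} : (armGraph n).Adj .start t ↔ t = b0 n 0 := by
  cases t <;> grind [armGraph, fromRel_adj, armRel, b0]

theorem adj_b2prev_b0 {x : ℕ} (hx : x ≤ n) : (armGraph n).Adj (b2prev n x) (b0 n x) := by
  cases x with
  | zero => rw [b2prev_zero, adj_start_iff]
  | succ x =>
    rw [b2prev_succ hx, adj_outer_iff]
    exact Or.inr (Or.inr (Or.inr ⟨rfl, rfl⟩))

/-- The vertex lies past the edge from `b₂^{x-1}` to `b₀ˣ`, the end `b₀ˣ` of this edge included. -/
def IsBeyond (x : ℕ) : ArmVert n → Prop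
  | start => False
  | finish => True
  | inner y _ => x ≤ y
  | outer y _ => x ≤ y
  | center y => x ≤ y

theorem isBeyond_b0 (x : ℕ) : IsBeyond x (b0 n x) := by
  by_cases h : x < n <;> simp [b0, h, IsBeyond]

theorem not_isBeyond_b2prev {x : ℕ} (hx : x ≤ n) : ¬ IsBeyond x (b2prev n x) := by
  grind [b2prev, IsBeyond]

theorem isBeyond_zero_iff {t : ArmVert n} : IsBeyond 0 t ↔ t ≠ .start := by
  cases t <;> simp [IsBeyond]

theorem isBeyond_self_iff {t : ArmVert n} : IsBeyond n t ↔ t = b0 n n := by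
  cases t <;> grind [b0_self, IsBeyond]

theorem IsBeyond.mono {x y : ℕ} (hxy : x ≤ y) {t : ArmVert n} (h : IsBeyond y t) :
    IsBeyond x t := by
  cases t <;> grind [IsBeyond]

theorem IsBeyond.cases {x : Fin n} {t : ArmVert n} (h : IsBeyond x t) :
    (∃ i, t = inner x i ∨ t = outer x i) ∨ t = center x ∨ IsBeyond (x + 1) t := by
  cases t <;> simp only [IsBeyond, inner.injEq, outer.injEq, center.injEq] at h ⊢ <;>
    grind [Fin.ext_iff]

theorem eq_of_adj_of_isBeyond {x : ℕ} (hx : x ≤ n) {t t' : ArmVert n} (ht : ¬ IsBeyond x t)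
    (ht' : IsBeyond x t') (h : (armGraph n).Adj t t') : t = b2prev n x ∧ t' = b0 n x := by
  cases t <;> cases t' <;>
    grind [IsBeyond, armGraph, fromRel_adj, armRel, b0, b2prev, Fin.ext_iff]

theorem reachable_start_b0 {x : ℕ} (hx : x ≤ n) :
    (armGraph n).Reachable start (b0 n x) := by
  induction x with
  | zero => exact (adj_start_iff.2 rfl).reachable
  | succ x ih =>
    have outer_adj {i j : Fin 5} (h : fin5adj i j) :
        (armGraph n).Adj (outer ⟨x, hx⟩ i) (outer ⟨x, hx⟩ j) :=
      adj_outer_iff.2 (Or.inr (Or.inl ⟨j, h, rfl⟩))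
    have to_outer : (armGraph n).Reachable start (outer ⟨x, hx⟩ 0) := b0_of_lt hx ▸ ih (by omega)
    have to_next := adj_b2prev_b0 (n := n) hx
    rw [b2prev_succ hx] at to_next
    exact to_outer.trans ((outer_adj (j := 1) (by decide)).reachable.trans
      ((outer_adj (by decide)).reachable.trans to_next.reachable))

end ArmVert

open ArmVert in
theorem armGraph_connected (n : ℕ) : (armGraph n).Connected := by
  have inner_zero (x : Fin n) : (armGraph n).Reachable start (inner x 0) :=
    (b0_of_lt x.2 ▸ reachable_start_b0 x.2.le).trans
      (adj_outer_iff.2 (Or.inl ⟨0, by decide, rfl⟩)).reachable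
  have center (x : Fin n) : (armGraph n).Reachable start (center x) :=
    (inner_zero x).trans (adj_inner_iff.2 (Or.inr (Or.inr rfl))).reachable
  have inner (x : Fin n) (i : Fin 5) : (armGraph n).Reachable start (inner x i) :=
    (center x).trans (adj_center_iff.2 ⟨i, rfl⟩).reachable
  have reachable (t : ArmVert n) : (armGraph n).Reachable start t := by
    cases t with
    | start => exact .refl _
    | finish => exact b0_self ▸ reachable_start_b0 le_rfl
    | inner x i => exact inner x i
    | outer x i =>
      exact (inner x i).trans (adj_inner_iff.2 (Or.inr (Or.inl ⟨i, Or.inl rfl, rfl⟩))).reachable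
    | center x => exact center x
  exact (connected_iff_exists_forall_reachable _).2 ⟨start, reachable⟩

end ArmGraph

section PendantArm

variable {V : Type*} {G : SimpleGraph V} {n : ℕ} {φ : armGraph n ↪g G} {root : V}

/-- The vertex `root` is adjacent to `b₂⁻¹`, and no other edge joins the induced copy `φ` of the arm
graph to the rest of the graph. -/
structure IsPendantArm (φ : armGraph n ↪g G) (root : V) : Prop where
  adj_start : G.Adj root (φ .start)
  eq_of_adj : ∀ ⦃t u⦄, G.Adj (φ t) u → u ∉ Set.range φ → t = .start ∧ u = root

/-- The part of the arm that lies past the edge from `b₂^{x-1}` to `b₀ˣ`. -/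
def armBeyond (φ : armGraph n ↪g G) (x : ℕ) : Set V := φ '' {t | t.IsBeyond x}

/-- The part of the graph not past `b₀ˣ`, this vertex included. -/
def armUpTo (φ : armGraph n ↪g G) (x : ℕ) : Set V := insert (φ (b0 n x)) (armBeyond φ x)ᶜ

/-- The vertex `z` is at distance `e` behind `b₀ˣ`. -/
def TrailsBy (φ : armGraph n ↪g G) (x e : ℕ) (z : V) : Prop :=
  z ∈ armUpTo φ x ∧ G.dist z (φ (b0 n x)) = e

/-- The vertex `z` is one of the two vertices `a_i^x`, `b_i^x` of the arm. -/
def HasIndex (φ : armGraph n ↪g G) (x : Fin n) (i : Fin 5) (z : V) : Prop :=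
  z = φ (.inner x i) ∨ z = φ (.outer x i)

section Membership

variable {x : ℕ} {t : ArmVert n} {z : V}

theorem apply_mem_armBeyond_iff : φ t ∈ armBeyond φ x ↔ t.IsBeyond x :=
  φ.injective.mem_set_image

theorem b0_mem_armBeyond : φ (b0 n x) ∈ armBeyond φ x :=
  apply_mem_armBeyond_iff.2 (ArmVert.isBeyond_b0 x)

theorem b2prev_notMem_armBeyond (hx : x ≤ n) : φ (b2prev n x) ∉ armBeyond φ x := by
  rw [apply_mem_armBeyond_iff]
  exact ArmVert.not_isBeyond_b2prev hx

theorem notMem_armBeyond_of_notMem_range (hz : z ∉ Set.range φ) : z ∉ armBeyond φ x :=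
  fun h => hz (Set.image_subset_range _ _ h)

theorem armBeyond_anti {y : ℕ} (hxy : x ≤ y) : armBeyond φ y ⊆ armBeyond φ x :=
  Set.image_mono fun _ ht => ht.mono hxy

theorem armBeyond_self : armBeyond φ n = {φ (b0 n n)} := by
  rw [armBeyond, show {t : ArmVert n | t.IsBeyond n} = {b0 n n} from
    Set.ext fun _ => ArmVert.isBeyond_self_iff, Set.image_singleton]

theorem armUpTo_subset_succ (x : Fin n) : armUpTo φ x ⊆ (armBeyond φ (x + 1))ᶜ := by
  rintro _ (rfl | hz)
  · rw [Set.mem_compl_iff, apply_mem_armBeyond_iff, b0_of_lt x.2]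
    simp [ArmVert.IsBeyond]
  · exact fun h => hz (armBeyond_anti (Nat.le_succ x) h)

end Membership

namespace HasIndex

variable {x : Fin n} {i j : Fin 5} {z s : V}

theorem inner (x : Fin n) (i : Fin 5) : HasIndex φ x i (φ (.inner x i)) := Or.inl rfl

theorem outer (x : Fin n) (i : Fin 5) : HasIndex φ x i (φ (.outer x i)) := Or.inr rfl

theorem b0 (x : Fin n) : HasIndex φ x 0 (φ (b0 n x)) := by
  rw [b0_of_lt x.2]
  exact outer x 0

theorem unique (hi : HasIndex φ x i z) (hj : HasIndex φ x j z) : i = j := by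
  rcases hi with rfl | rfl <;> rcases hj with h | h <;> simpa using φ.injective h

theorem ne (hi : HasIndex φ x i z) (hj : HasIndex φ x j s) (hij : i ≠ j) : z ≠ s := by
  rintro rfl
  exact hij (hi.unique hj)

theorem mem_armBeyond (hi : HasIndex φ x i z) : z ∈ armBeyond φ x := by
  rcases hi with rfl | rfl <;> exact apply_mem_armBeyond_iff.2 le_rfl

theorem notMem_armBeyond_succ (hi : HasIndex φ x i z) : z ∉ armBeyond φ (x + 1) := by
  rcases hi with rfl | rfl <;> simp [apply_mem_armBeyond_iff, ArmVert.IsBeyond]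

theorem adjOrEq (hi : HasIndex φ x i z) (hj : HasIndex φ x j s) (hij : Fin5Near i j) :
    AdjOrEq G z s := by
  rcases hi with rfl | rfl <;> rcases hj with rfl | rfl <;>
    simp only [AdjOrEq, φ.map_adj_iff, φ.injective.eq_iff, ArmVert.adj_inner_iff,
      ArmVert.adj_outer_iff] <;>
    grind [Fin5Near]

theorem adj (hi : HasIndex φ x i z) (hj : HasIndex φ x j s) (hij : fin5adj i j) : G.Adj z s :=
  (hi.adjOrEq hj (Or.inr hij)).resolve_left
    (hj.ne hi fun h => not_fin5adj_self i (h ▸ hij))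

end HasIndex

theorem mem_armBeyond_cases {x : Fin n} {s : V} (hs : s ∈ armBeyond φ x) :
    (∃ i, HasIndex φ x i s) ∨ s = φ (.center x) ∨ s ∈ armBeyond φ (x + 1) := by
  obtain ⟨t, ht, rfl⟩ := hs
  rcases ArmVert.IsBeyond.cases ht with ⟨i, rfl | rfl⟩ | rfl | ht
  · exact Or.inl ⟨i, .inner x i⟩
  · exact Or.inl ⟨i, .outer x i⟩
  · exact Or.inr (Or.inl rfl)
  · exact Or.inr (Or.inr (apply_mem_armBeyond_iff.2 ht))

theorem adj_inner_center (x : Fin n) (i : Fin 5) : G.Adj (φ (.inner x i)) (φ (.center x)) :=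
  φ.map_adj_iff.2 (ArmVert.adj_inner_iff.2 (Or.inr (Or.inr rfl)))

theorem not_adjOrEq_center_outer (x : Fin n) (i : Fin 5) :
    ¬ AdjOrEq G (φ (.center x)) (φ (.outer x i)) := by
  simp [AdjOrEq, ArmVert.adj_center_iff]

theorem adj_b2prev_b0 {x : ℕ} (hx : x ≤ n) : G.Adj (φ (b2prev n x)) (φ (b0 n x)) :=
  φ.map_adj_iff.2 (ArmVert.adj_b2prev_b0 hx)

namespace IsPendantArm

variable {x : ℕ} {u v z s : V}

theorem exists_adjOrEq (hA : IsPendantArm φ root) {t : ArmVert n} (ht : t ≠ .start)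
    (h : AdjOrEq G (φ t) u) : ∃ t', u = φ t' ∧ AdjOrEq (armGraph n) t t' := by
  obtain rfl | h := h
  · exact ⟨t, rfl, .refl t⟩
  · by_cases hu : u ∈ Set.range φ
    · obtain ⟨t', rfl⟩ := hu
      exact ⟨t', rfl, Or.inr (φ.map_adj_iff.1 h)⟩
    · exact absurd (hA.eq_of_adj h hu).1 ht

theorem eq_of_adj_of_mem_armBeyond (hA : IsPendantArm φ root) (hx : x ≤ n)
    (hu : u ∉ armBeyond φ x) (hv : v ∈ armBeyond φ x) (h : G.Adj u v) :
    u = φ (b2prev n x) ∧ v = φ (b0 n x) := by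
  obtain ⟨t, ht, rfl⟩ := hv
  obtain ⟨t', rfl, h'⟩ := hA.exists_adjOrEq (by rintro rfl; exact ht) (Or.inr h.symm)
  rw [apply_mem_armBeyond_iff] at hu
  obtain rfl | h' := h'
  · exact absurd ht hu
  · obtain ⟨rfl, rfl⟩ := ArmVert.eq_of_adj_of_isBeyond hx hu ht h'.symm
    exact ⟨rfl, rfl⟩

theorem mem_armBeyond_of_adjOrEq (hA : IsPendantArm φ root) (hx : x ≤ n) (hu : u ∈ armBeyond φ x)
    (h : AdjOrEq G u v) : v ∈ armBeyond φ x ∨ v = φ (b2prev n x) ∧ u = φ (b0 n x) := by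
  by_cases hv : v ∈ armBeyond φ x
  · exact Or.inl hv
  · have hadj : G.Adj v u := h.symm.resolve_left fun huv => hv (huv ▸ hu)
    exact Or.inr (hA.eq_of_adj_of_mem_armBeyond hx hv hu hadj)

theorem isCut_armUpTo (hA : IsPendantArm φ root) (hx : x ≤ n) :
    IsCut G (armUpTo φ x) (φ (b0 n x)) := by
  intro u v hu hv h
  have hv' : v ∈ armBeyond φ x := by_contra fun hv' => hv (Or.inr hv')
  refine hu.elim id fun hu => absurd ?_ hv
  exact Or.inl (hA.eq_of_adj_of_mem_armBeyond hx hu hv' h).2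

theorem isCut_compl_armBeyond (hA : IsPendantArm φ root) (hx : x ≤ n) :
    IsCut G (armBeyond φ x)ᶜ (φ (b2prev n x)) :=
  fun _ _ hu hv h => (hA.eq_of_adj_of_mem_armBeyond hx hu (not_not.1 hv) h).1

theorem isCut_compl_range (hA : IsPendantArm φ root) : IsCut G (Set.range φ)ᶜ root := by
  intro u v hu hv h
  obtain ⟨t, rfl⟩ := not_not.1 hv
  exact (hA.eq_of_adj h.symm hu).2

theorem dist_eq_of_mem_armUpTo (hA : IsPendantArm φ root) (hG : G.Connected) (hx : x ≤ n)
    (hz : z ∈ armUpTo φ x) (hs : s ∈ armBeyond φ x) :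
    G.dist z s = G.dist z (φ (b0 n x)) + G.dist (φ (b0 n x)) s := by
  by_cases h : s ∈ armUpTo φ x
  · obtain rfl := h.resolve_right (not_not.2 hs)
    simp
  · exact (hA.isCut_armUpTo hx).dist_eq hG hz h

theorem adjOrEq_cases (hA : IsPendantArm φ root) {x : Fin n} {i : Fin 5} {s s' : V}
    (hs : HasIndex φ x i s) (h : AdjOrEq G s s') :
    (∃ j, Fin5Near i j ∧ HasIndex φ x j s') ∨
      (s = φ (.inner x i) ∧ s' = φ (.center x)) ∨
      (s = φ (.outer x 0) ∧ i = 0 ∧ s' = φ (b2prev n x)) ∨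
      (s = φ (.outer x 2) ∧ i = 2 ∧ s' = φ (b0 n (x + 1))) := by
  rcases hs with rfl | rfl <;> obtain ⟨t, rfl, rfl | ht⟩ := hA.exists_adjOrEq (by simp) h
  · exact Or.inl ⟨i, Or.inl rfl, .inner x i⟩
  · rcases ArmVert.adj_inner_iff.1 ht with ⟨j, hj, rfl⟩ | ⟨j, hj, rfl⟩ | rfl
    · exact Or.inl ⟨j, Or.inr hj, .inner x j⟩
    · exact Or.inl ⟨j, hj, .outer x j⟩
    · exact Or.inr (Or.inl ⟨rfl, rfl⟩)
  · exact Or.inl ⟨i, Or.inl rfl, .outer x i⟩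
  · rcases ArmVert.adj_outer_iff.1 ht with ⟨j, hj, rfl⟩ | ⟨j, hj, rfl⟩ | ⟨rfl, rfl⟩ | ⟨rfl, rfl⟩
    · exact Or.inl ⟨j, hj, .inner x j⟩
    · exact Or.inl ⟨j, Or.inr hj, .outer x j⟩
    · exact Or.inr (Or.inr (Or.inl ⟨rfl, rfl, rfl⟩))
    · exact Or.inr (Or.inr (Or.inr ⟨rfl, rfl, rfl⟩))

variable {y : Fin n} {i j l : Fin 5}

theorem adjOrEq_center (hA : IsPendantArm φ root) (h : AdjOrEq G (φ (.center y)) u) :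
    u = φ (.center y) ∨ ∃ i, u = φ (.inner y i) := by
  obtain ⟨t, rfl, rfl | ht⟩ := hA.exists_adjOrEq (by simp) h
  · exact Or.inl rfl
  · obtain ⟨i, rfl⟩ := ArmVert.adj_center_iff.1 ht
    exact Or.inr ⟨i, rfl⟩

theorem adjOrEq_cases_of_inner (hA : IsPendantArm φ root) {s' : V} (hs : HasIndex φ y i s)
    (h : AdjOrEq G s s') (hz : z = φ (.inner y l)) (hzs : ¬ AdjOrEq G z s') :
    (∃ j, Fin5Near i j ∧ ¬ Fin5Near l j ∧ HasIndex φ y j s') ∨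
      (i = 0 ∧ s' = φ (b2prev n y)) ∨ (i = 2 ∧ s' = φ (b0 n (y + 1))) := by
  subst hz
  rcases hA.adjOrEq_cases hs h with ⟨j, hij, hj⟩ | ⟨-, rfl⟩ | ⟨-, hi, hs'⟩ | ⟨-, hi, hs'⟩
  · exact Or.inl ⟨j, hij, fun hlj => hzs ((HasIndex.inner y l).adjOrEq hj hlj), hj⟩
  · exact absurd (Or.inr (adj_inner_center y l)) hzs
  · exact Or.inr (Or.inl ⟨hi, hs'⟩)
  · exact Or.inr (Or.inr ⟨hi, hs'⟩)

theorem adjOrEq_iff_near (hA : IsPendantArm φ root) (hz : HasIndex φ y i z)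
    (hs : HasIndex φ y j s) : AdjOrEq G z s ↔ Fin5Near i j := by
  refine ⟨fun h => ?_, hz.adjOrEq hs⟩
  rcases hA.adjOrEq_cases hz h with ⟨j', hj', hs'⟩ | ⟨-, rfl⟩ | ⟨-, -, rfl⟩ | ⟨-, -, rfl⟩
  · rwa [hs.unique hs']
  · rcases hs with hs | hs <;> simp at hs
  · exact absurd hs.mem_armBeyond (b2prev_notMem_armBeyond y.2.le)
  · exact absurd b0_mem_armBeyond hs.notMem_armBeyond_succ

theorem eq_zero_of_adjOrEq_b2prev (hA : IsPendantArm φ root) (hs : HasIndex φ y j s)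
    (h : AdjOrEq G s (φ (b2prev n y))) : j = 0 := by
  obtain h | h := h
  · exact absurd (h ▸ hs.mem_armBeyond) (b2prev_notMem_armBeyond y.2.le)
  · exact hs.unique ((hA.eq_of_adj_of_mem_armBeyond y.2.le (b2prev_notMem_armBeyond y.2.le)
      hs.mem_armBeyond h.symm).2 ▸ .b0 y)

theorem eq_two_of_adjOrEq_b0 (hA : IsPendantArm φ root) (hs : HasIndex φ y j s)
    (h : AdjOrEq G s (φ (b0 n (y + 1)))) : j = 2 := by
  have hs' := hs.notMem_armBeyond_succ
  obtain h | h := h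
  · exact absurd (h ▸ b0_mem_armBeyond) hs'
  · have := (hA.eq_of_adj_of_mem_armBeyond y.2 hs' b0_mem_armBeyond h).1
    rw [b2prev_succ y.2] at this
    exact hs.unique (this ▸ .outer y 2)

theorem isZombieMove_inner (hA : IsPendantArm φ root) (hG : G.Connected)
    (hz : HasIndex φ y i z) (hs : HasIndex φ y j s) (hij : ¬ Fin5Near i j) (hil : fin5adj i l)
    (hlj : Fin5Near l j) : IsZombieMove G z s (φ (.inner y l)) :=
  isZombieMove_of_adj_of_adjOrEq hG (hz.adj (.inner y l) hil) ((HasIndex.inner y l).adjOrEq hs hlj)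
    (mt (hA.adjOrEq_iff_near hz hs).1 hij)

theorem dist_of_not_near (hA : IsPendantArm φ root) (hG : G.Connected)
    (hz : HasIndex φ y i z) (hs : HasIndex φ y j s) (hij : ¬ Fin5Near i j) : G.dist z s = 2 := by
  obtain ⟨l, hil, hlj⟩ := exists_fin5adj_fin5Near i j
  have hm := hA.isZombieMove_inner hG hz hs hij hil hlj
  have := (adjOrEq_iff_dist_le_one hG).1 ((HasIndex.inner (φ := φ) y l).adjOrEq hs hlj)
  have := mt (adjOrEq_iff_dist_le_one hG).2 (mt (hA.adjOrEq_iff_near hz hs).1 hij)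
  have := hm.dist_add_one hG
  omega

theorem hasIndex_of_isZombieMove (hA : IsPendantArm φ root) (hG : G.Connected)
    (hz : HasIndex φ y i z) (hij : ¬ Fin5Near i j)
    (hl : ∀ l', Fin5Near i l' → Fin5Near j l' → l' = l)
    (hm : IsZombieMove G z (φ (.outer y j)) v) : HasIndex φ y l v := by
  have hs : HasIndex φ y j (φ (.outer y j)) := .outer y j
  have hv : AdjOrEq G (φ (.outer y j)) v := by
    refine ((adjOrEq_iff_dist_le_one hG).2 ?_).symm
    have := hA.dist_of_not_near hG hz hs hij
    have := hm.2
    omega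
  rcases hA.adjOrEq_cases hz (Or.inr hm.1) with ⟨l', hl', hv'⟩ | ⟨-, rfl⟩ | ⟨-, rfl, rfl⟩ |
    ⟨-, rfl, rfl⟩
  · exact hl l' hl' ((hA.adjOrEq_iff_near hs hv').1 hv) ▸ hv'
  · exact absurd hv.symm (not_adjOrEq_center_outer y j)
  · exact absurd (Or.inl (hA.eq_zero_of_adjOrEq_b2prev hs hv).symm) hij
  · exact absurd (Or.inl (hA.eq_two_of_adjOrEq_b0 hs hv).symm) hij

end IsPendantArm

namespace TrailsBy

variable {x e : ℕ} {z z' s : V}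

theorem eq_b0 (hG : G.Connected) (h : TrailsBy φ x 0 z) : z = φ (b0 n x) :=
  hG.dist_eq_zero_iff.1 h.2

theorem eq_b2prev (hA : IsPendantArm φ root) (hx : x ≤ n) (h : TrailsBy φ x 1 z) :
    z = φ (b2prev n x) := by
  have hz : z ≠ φ (b0 n x) := by
    rintro rfl
    simpa using h.2
  exact (hA.eq_of_adj_of_mem_armBeyond hx (h.1.resolve_left hz) b0_mem_armBeyond
    (dist_eq_one_iff_adj.1 h.2)).1

theorem adjOrEq_b2prev (hA : IsPendantArm φ root) (hG : G.Connected) (hx : x ≤ n)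
    (h : TrailsBy φ x e z) (he : e ≤ 1) : AdjOrEq G z (φ (b2prev n x)) := by
  obtain rfl | rfl : e = 0 ∨ e = 1 := by omega
  · exact h.eq_b0 hG ▸ Or.inr (adj_b2prev_b0 hx).symm
  · exact Or.inl (h.eq_b2prev hA hx).symm

theorem dist_eq (hA : IsPendantArm φ root) (hG : G.Connected) (hx : x ≤ n)
    (h : TrailsBy φ x e z) (hs : s ∈ armBeyond φ x) :
    G.dist z s = e + G.dist (φ (b0 n x)) s := by
  rw [hA.dist_eq_of_mem_armUpTo hG hx h.1 hs, h.2]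

theorem of_isZombieMove (hA : IsPendantArm φ root) (hG : G.Connected) (hx : x ≤ n) {e' : ℕ}
    (he : e' + 1 = e) (h : TrailsBy φ x e z) (hs : s ∈ armBeyond φ x)
    (hm : IsZombieMove G z s z') : TrailsBy φ x e' z' := by
  have hz : z ≠ φ (b0 n x) := by
    rintro rfl
    simp [← h.2] at he
  have hz' := (hA.isCut_armUpTo hx).mem_of_isZombieMove h.1 hm hz
  have := hA.dist_eq_of_mem_armUpTo hG hx hz' hs
  have := h.dist_eq hA hG hx hs
  have := hm.dist_add_one hG
  exact ⟨hz', by omega⟩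

theorem succ_of_dist (hA : IsPendantArm φ root) (hG : G.Connected) {x : Fin n}
    (hz : z ∉ armBeyond φ (x + 1)) (h : G.dist z (φ (.outer x 2)) = e) :
    TrailsBy φ (x + 1) (e + 1) z := by
  refine ⟨Or.inr hz, ?_⟩
  have hadj : G.Adj (φ (.outer x 2)) (φ (b0 n (x + 1))) := by
    simpa [b2prev_succ x.2] using adj_b2prev_b0 (φ := φ) (x := x + 1) x.2
  have := (hA.isCut_compl_armBeyond (x := x + 1) x.2).dist_eq hG hz (not_not.2 b0_mem_armBeyond)
  rw [b2prev_succ x.2, Fin.eta, dist_eq_one_iff_adj.2 hadj] at this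
  omega

theorem succ (hA : IsPendantArm φ root) (hG : G.Connected) {x : Fin n} (h : TrailsBy φ x e z) :
    TrailsBy φ (x + 1) (e + 3) z := by
  have h2 := HasIndex.outer (φ := φ) x 2
  refine succ_of_dist hA hG (armUpTo_subset_succ x h.1) ?_
  rw [h.dist_eq hA hG x.2.le h2.mem_armBeyond, hA.dist_of_not_near hG (.b0 x) h2 (by decide)]

theorem of_hasIndex (hA : IsPendantArm φ root) (hG : G.Connected) {x : Fin n} {i : Fin 5}
    (h : HasIndex φ x i z) (hi : fin5adj i 2) : TrailsBy φ (x + 1) 2 z :=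
  succ_of_dist hA hG h.notMem_armBeyond_succ
    (dist_eq_one_iff_adj.2 (h.adj (.outer x 2) hi))

theorem of_notMem_range (hA : IsPendantArm φ root) (hG : G.Connected) (hz : z ∉ Set.range φ) :
    TrailsBy φ 0 (G.dist z root + 2) z := by
  have hz0 : z ∉ armBeyond φ 0 := notMem_armBeyond_of_notMem_range hz
  have hb : G.Adj (φ .start) (φ (b0 n 0)) := b2prev_zero ▸ adj_b2prev_b0 n.zero_le
  have hstart := (hA.isCut_compl_armBeyond n.zero_le).dist_eq hG hz0 (not_not.2 b0_mem_armBeyond)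
  have hroot := hA.isCut_compl_range.dist_eq hG hz (not_not.2 (Set.mem_range_self .start))
  rw [b2prev_zero, dist_eq_one_iff_adj.2 hb] at hstart
  rw [dist_eq_one_iff_adj.2 hA.adj_start] at hroot
  exact ⟨Or.inr hz0, by omega⟩

end TrailsBy

end PendantArm

/-! ### Zombies win on an arm -/

section ZombiesOnArm

variable {V : Type*} {G : SimpleGraph V} {n : ℕ} {φ : armGraph n ↪g G} {root : V} {J : ℕ}
  {z : Fin J → V} {s : V} {p q : Fin J}

theorem TrailsBy.hasIndex_zero {x : Fin n} {v : V} (hG : G.Connected) (h : TrailsBy φ x 0 v) :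
    HasIndex φ x 0 v :=
  h.eq_b0 hG ▸ .b0 x

namespace IsPendantArm

section Endgame

variable {x : Fin n} {c d : Fin 5} {e : ℕ}

theorem zombiesWin_of_near (hG : G.Connected) (hp : HasIndex φ x c (z p)) (hs : HasIndex φ x d s)
    (hcd : Fin5Near c d) : PursuersWin G (IsZombieMove G) z s :=
  .of_adjOrEq hG (fun _ _ _ => id) (hp.adjOrEq hs hcd)

theorem zombiesWin_of_index_zero (hA : IsPendantArm φ root) (hG : G.Connected)
    (hp : HasIndex φ x c (z p)) (hs : HasIndex φ x 0 s) (hq : TrailsBy φ x 1 (z q)) :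
    PursuersWin G (IsZombieMove G) z s := by
  by_cases hc : Fin5Near c 0
  · exact zombiesWin_of_near hG hp hs hc
  obtain rfl | rfl := hs
  · have hs := HasIndex.inner (φ := φ) x 0
    obtain ⟨l, hcl, hl⟩ := exists_fin5adj_fin5Near c 0
    refine .of_isZombieMove hG (fun _ _ _ => id) (· = p) (fun _ => φ (.inner x l))
      (by rintro _ rfl; exact hA.isZombieMove_inner hG hp hs hc hcl hl)
      fun z' hz hz'p s' hs' hfar => absurd ?_ (hfar q)
    have hq' := (hq.of_isZombieMove hA hG x.2.le rfl hs.mem_armBeyond (hz q)).hasIndex_zero hG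
    rcases hA.adjOrEq_cases hs hs' with ⟨j, hj, hj'⟩ | ⟨-, rfl⟩ | ⟨h, -⟩ | ⟨h, -⟩
    · exact hq'.adjOrEq hj' hj
    · exact absurd (Or.inr (hz'p p rfl ▸ adj_inner_center x l)) (hfar p)
    all_goals simp at h
  · refine .of_adjOrEq hG (fun _ _ _ => id) (i := q) (Or.inr ?_)
    rw [hq.eq_b2prev hA x.2.le, ← b0_of_lt x.2]
    exact adj_b2prev_b0 x.2.le

theorem zombiesWin_of_adj_index_zero (hA : IsPendantArm φ root) (hG : G.Connected)
    (hd : fin5adj d 0) (hc : ¬ Fin5Near c 0) (hp : HasIndex φ x c (z p)) (hs : HasIndex φ x d s)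
    (hq : TrailsBy φ x e (z q)) (he : e ≤ 2) : PursuersWin G (IsZombieMove G) z s := by
  by_cases hcd : Fin5Near c d
  · exact zombiesWin_of_near hG hp hs hcd
  obtain _ | e := e
  · exact zombiesWin_of_near hG (hq.hasIndex_zero hG) hs (Or.inr (fin5adj_comm.1 hd))
  obtain ⟨l, hcl, hl⟩ := exists_fin5adj_fin5Near c d
  refine .of_isZombieMove hG (fun _ _ _ => id) (· = p) (fun _ => φ (.inner x l))
    (by rintro _ rfl; exact hA.isZombieMove_inner hG hp hs hcd hcl hl)
    fun z' hz hz'p s' hs' hfar => ?_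
  have hq' := hq.of_isZombieMove hA hG x.2.le rfl hs.mem_armBeyond (hz q)
  have hp' := hz'p p rfl
  rcases hA.adjOrEq_cases_of_inner hs hs' hp' (hfar p) with ⟨j, hdj, hlj, hj⟩ | ⟨rfl, -⟩ | ⟨rfl, -⟩
  · have forced : ∀ c d l j, fin5adj d 0 → ¬ Fin5Near c 0 → ¬ Fin5Near c d → fin5adj c l →
        Fin5Near l d → Fin5Near d j → ¬ Fin5Near l j → j = 0 := by decide
    obtain rfl := forced c d l j hd hc hcd hcl hl hdj hlj
    obtain rfl | rfl : e = 0 ∨ e = 1 := by omega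
    · exact zombiesWin_of_near hG (hq'.hasIndex_zero hG) hj (Or.inl rfl)
    · exact hA.zombiesWin_of_index_zero hG (Or.inl hp') hj hq'
  all_goals exact absurd hd (by decide)

theorem zombiesWin_of_index_one_zero (hA : IsPendantArm φ root) (hG : G.Connected)
    (hp : HasIndex φ x 1 (z p)) (hq : HasIndex φ x 0 (z q)) (hs : HasIndex φ x 3 s) :
    PursuersWin G (IsZombieMove G) z s := by
  have hpq : q ≠ p := by
    rintro rfl
    exact absurd (hp.unique hq) (by decide)
  refine .of_isZombieMove hG (fun _ _ _ => id) (fun i => i = p ∨ i = q)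
    (fun i => if i = p then φ (.inner x 2) else φ (.inner x 4)) ?_
    fun z' _ hz' s' hs' hfar => ?_
  · rintro _ (rfl | rfl)
    · simpa using hA.isZombieMove_inner hG hp hs (by decide) (by decide) (by decide)
    · simpa [hpq] using hA.isZombieMove_inner hG hq hs (by decide) (by decide) (by decide)
  have hp' : z' p = φ (.inner x 2) := by simpa using hz' p (Or.inl rfl)
  have hq' : z' q = φ (.inner x 4) := by simpa [hpq] using hz' q (Or.inr rfl)
  rcases hA.adjOrEq_cases_of_inner hs hs' hp' (hfar p) with ⟨j, h3j, h2j, hj⟩ | ⟨h, -⟩ | ⟨h, -⟩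
  · obtain rfl : j = 4 := by clear * - h3j h2j; decide +revert
    exact zombiesWin_of_near hG (Or.inl hq') hj (Or.inl rfl)
  all_goals exact absurd h (by decide)

theorem zombiesWin_of_index_one (hA : IsPendantArm φ root) (hG : G.Connected)
    (hp : HasIndex φ x 1 (z p)) (hs : HasIndex φ x 3 s) (hq : TrailsBy φ x e (z q)) (he : e ≤ 3) :
    PursuersWin G (IsZombieMove G) z s := by
  obtain _ | e := e
  · exact hA.zombiesWin_of_index_one_zero hG hp (hq.hasIndex_zero hG) hs
  refine .of_isZombieMove hG (fun _ _ _ => id) (· = p) (fun _ => φ (.inner x 2))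
    (by
      rintro _ rfl
      exact hA.isZombieMove_inner hG hp hs (by decide) (by decide) (by decide))
    fun z' hz hz'p s' hs' hfar => ?_
  have hq' := hq.of_isZombieMove hA hG x.2.le rfl hs.mem_armBeyond (hz q)
  have hp' := hz'p p rfl
  rcases hA.adjOrEq_cases_of_inner hs hs' hp' (hfar p) with ⟨j, h3j, h2j, hj⟩ | ⟨h, -⟩ | ⟨h, -⟩
  · obtain rfl : j = 4 := by clear * - h3j h2j; decide +revert
    exact hA.zombiesWin_of_adj_index_zero hG (by decide) (by decide) (Or.inl hp') hj hq'
      (by omega)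
  all_goals exact absurd h (by decide)

theorem zombiesWin_of_center_of_outer (hA : IsPendantArm φ root) (hG : G.Connected) (hd : d ≠ 2)
    (hp : z p = φ (.center x)) (hq : TrailsBy φ x e (z q)) (he : e ≤ 2) :
    PursuersWin G (IsZombieMove G) z (φ (.outer x d)) := by
  have hs := HasIndex.outer (φ := φ) x d
  refine .of_isZombieMove hG (fun _ _ _ => id) (· = p) (fun _ => φ (.inner x d)) ?_
    fun z' hz hz'p s' hs' hfar => ?_
  · rintro _ rfl
    rw [hp]
    exact isZombieMove_of_adj_of_adjOrEq hG (adj_inner_center x d).symm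
      ((HasIndex.inner x d).adjOrEq hs (Or.inl rfl)) (not_adjOrEq_center_outer x d)
  have hp' : HasIndex φ x d (z' p) := Or.inl (hz'p p rfl)
  rcases hA.adjOrEq_cases hs hs' with ⟨j, hj, hj'⟩ | ⟨h, -⟩ | ⟨-, rfl, rfl⟩ | ⟨-, h, -⟩
  · exact zombiesWin_of_near hG hp' hj' hj
  · simp at h
  · obtain ⟨e, rfl⟩ : ∃ e', e = e' + 1 := by
      have := (hz q).2
      rw [hq.dist_eq hA hG x.2.le hs.mem_armBeyond, b0_of_lt x.2, Fin.eta, dist_self] at this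
      exact ⟨e - 1, by omega⟩
    have hq' := hq.of_isZombieMove hA hG x.2.le rfl hs.mem_armBeyond (hz q)
    exact absurd (hq'.adjOrEq_b2prev hA hG x.2.le (by omega)) (hfar q)
  · exact absurd h hd

theorem zombiesWin_of_inner_one_inner_four (hA : IsPendantArm φ root) (hG : G.Connected)
    (hp : z p = φ (.inner x 1)) (hq : TrailsBy φ x e (z q)) (he : e ≤ 3) :
    PursuersWin G (IsZombieMove G) z (φ (.inner x 4)) := by
  have hs := HasIndex.inner (φ := φ) x 4
  obtain _ | e := e
  · exact zombiesWin_of_near hG (hq.hasIndex_zero hG) hs (by decide)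
  refine .of_isZombieMove hG (fun _ _ _ => id) (· = p) (fun _ => φ (.center x)) ?_
    fun z' hz hz'p s' hs' hfar => ?_
  · rintro _ rfl
    rw [hp]
    exact isZombieMove_of_adj_of_adjOrEq hG (adj_inner_center x 1)
      (Or.inr (adj_inner_center x 4).symm)
      (mt (hA.adjOrEq_iff_near (.inner x 1) hs).1 (by decide))
  have hp' := hz'p p rfl
  have hq' := hq.of_isZombieMove hA hG x.2.le rfl hs.mem_armBeyond (hz q)
  have hfar_p : ¬ AdjOrEq G (φ (.center x)) s' := hp' ▸ hfar p
  rcases hA.adjOrEq_cases hs hs' with ⟨j, hj, rfl | rfl⟩ | ⟨-, rfl⟩ | ⟨-, h, -⟩ | ⟨-, h, -⟩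
  · exact absurd (Or.inr (adj_inner_center x j).symm) hfar_p
  · exact hA.zombiesWin_of_center_of_outer hG (by rintro rfl; exact absurd hj (by decide)) hp' hq'
      (by omega)
  · exact absurd (.refl _) hfar_p
  all_goals exact absurd h (by decide)

theorem zombiesWin_of_center (hA : IsPendantArm φ root) (hG : G.Connected)
    (hp : TrailsBy φ x 0 (z p)) (hq : TrailsBy φ x (e + 1) (z q)) (he : e ≤ 3) :
    PursuersWin G (IsZombieMove G) z (φ (.center x)) := by
  refine .of_isZombieMove hG (fun _ _ _ => id) (· = p) (fun _ => φ (.inner x 1)) ?_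
    fun z' hz hz'p s' hs' hfar => ?_
  · rintro _ rfl
    rw [hp.eq_b0 hG, b0_of_lt x.2]
    exact isZombieMove_of_adj_of_adjOrEq hG
      ((HasIndex.outer x 0).adj (.inner x 1) (by decide)) (Or.inr (adj_inner_center x 1))
      fun h => not_adjOrEq_center_outer x 0 h.symm
  have hp' := hz'p p rfl
  have hq' := hq.of_isZombieMove hA hG x.2.le rfl (apply_mem_armBeyond_iff.2 le_rfl) (hz q)
  have hfar_p : ¬ AdjOrEq G (φ (.inner x 1)) s' := hp' ▸ hfar p
  obtain rfl | ⟨j, rfl⟩ := hA.adjOrEq_center hs'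
  · exact absurd (Or.inr (adj_inner_center x 1)) hfar_p
  have hj : ¬ Fin5Near 1 j := fun h => hfar_p ((HasIndex.inner x 1).adjOrEq (.inner x j) h)
  obtain rfl | rfl : j = 3 ∨ j = 4 := by clear * - hj; decide +revert
  · exact hA.zombiesWin_of_index_one hG (Or.inl hp') (.inner x 3) hq' he
  · exact hA.zombiesWin_of_inner_one_inner_four hG hp' hq' he

end Endgame

end IsPendantArm

/-- The condition on the lags `l` behind the foremost zombies under which zombies chasing the
survivor past `b₀ˣ` catch it: consecutive lags differ by at most four, and the last lag is at least
the number of copies still to be passed, as passing one of them may reduce the positive lags by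
one. -/
structure WellSpaced (n x : ℕ) (l : Fin J → ℕ) : Prop where
  zero : ∃ i, l i = 0
  gap : ∀ i, 0 < l i → ∃ i', l i' < l i ∧ l i ≤ l i' + 4
  top : ∃ i, n ≤ l i + x

namespace WellSpaced

variable {x : ℕ} {l : Fin J → ℕ}

theorem exists_lag_le_four (h : WellSpaced n x l) (hx : x < n) : ∃ i, 0 < l i ∧ l i ≤ 4 := by
  classical
  obtain ⟨i₀, hi₀⟩ := h.top
  obtain ⟨i, hi, hmin⟩ := Finset.exists_min_image {i | 0 < l i} l ⟨i₀, by simp; omega⟩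
  simp only [Finset.mem_filter, Finset.mem_univ, true_and] at hi hmin
  obtain ⟨i', hlt, hle⟩ := h.gap i hi
  have : l i' = 0 := by
    by_contra hpos
    have := hmin i' (Nat.pos_of_ne_zero hpos)
    omega
  exact ⟨i, hi, by omega⟩

theorem succ (h : WellSpaced n x l) : WellSpaced n (x + 1) l where
  zero := h.zero
  gap := h.gap
  top := h.top.imp fun _ h => by omega

theorem succ_pred (h : WellSpaced n x l) : WellSpaced n (x + 1) fun i => l i - 1 where
  zero := h.zero.imp fun _ h => by omega
  gap i hi := by
    obtain ⟨i', hlt, hle⟩ := h.gap i (by omega)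
    exact ⟨i', by omega, by omega⟩
  top := h.top.imp fun _ h => by omega

end WellSpaced

/-- The survivor being past `b₀ˣ`, well-spaced zombies win as soon as the foremost of them is at
distance `d` behind `b₀ˣ`. -/
def LineupWins (φ : armGraph n ↪g G) (J x d : ℕ) : Prop :=
  ∀ ⦃z : Fin J → V⦄ ⦃s : V⦄ ⦃l : Fin J → ℕ⦄, WellSpaced n x l → s ∈ armBeyond φ x →
    (∀ i, TrailsBy φ x (d + l i) (z i)) → PursuersWin G (IsZombieMove G) z s

namespace LineupWins

theorem succ_dist {x d : ℕ} (h : LineupWins φ J x d) (hA : IsPendantArm φ root)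
    (hG : G.Connected) (hx : x ≤ n) (hd : d ≤ 1) : LineupWins φ J x (d + 1) := by
  intro z s l hl hs hz
  refine .of_isZombieMove hG (fun _ _ _ => id) (fun _ => False) z (fun _ => False.elim)
    fun z' hz' _ s' hs' hfar => ?_
  have htrail : ∀ i, TrailsBy φ x (d + l i) (z' i) := fun i =>
    (hz i).of_isZombieMove hA hG hx (by omega) hs (hz' i)
  obtain hs'x | ⟨rfl, -⟩ := hA.mem_armBeyond_of_adjOrEq hx hs hs'
  · exact h hl hs'x htrail
  · obtain ⟨i, hi⟩ := hl.zero
    exact absurd ((htrail i).adjOrEq_b2prev hA hG hx (by omega)) (hfar i)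

theorem self (hG : G.Connected) : LineupWins φ J n 0 := by
  intro z s l hl hs hz
  obtain ⟨i, hi⟩ := hl.zero
  rw [armBeyond_self, Set.mem_singleton_iff] at hs
  have hz0 : TrailsBy φ n 0 (z i) := by simpa [hi] using hz i
  exact .caught i (hs ▸ hz0.eq_b0 hG)

section Step

variable {x : Fin n} {l : Fin J → ℕ}

theorem pursuersWin_of_leaders_index_one (h : LineupWins φ J (x + 1) 2)
    (hA : IsPendantArm φ root) (hG : G.Connected) (hl : WellSpaced n x l)
    (hlead : ∀ i, l i = 0 → HasIndex φ x 1 (z i))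
    (hrest : ∀ i e, l i = e + 1 → TrailsBy φ x e (z i)) (hs : s ∈ armBeyond φ (x + 1)) :
    PursuersWin G (IsZombieMove G) z s := by
  refine h hl.succ hs fun i => ?_
  obtain hi | ⟨e, hi⟩ : l i = 0 ∨ ∃ e, l i = e + 1 := by cases l i <;> simp
  · rw [hi]
    exact .of_hasIndex hA hG (hlead i hi) (by decide)
  · rw [hi, show 2 + (e + 1) = e + 3 by omega]
    exact (hrest i e hi).succ hA hG

theorem pursuersWin_of_index_two (h : LineupWins φ J (x + 1) 2) (hA : IsPendantArm φ root)
    (hG : G.Connected) (hl : WellSpaced n x l) (hz : ∀ i, TrailsBy φ x (l i) (z i))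
    (hs : HasIndex φ x 2 s) : PursuersWin G (IsZombieMove G) z s := by
  obtain ⟨p, hp⟩ := hl.zero
  obtain ⟨q, hq⟩ := hl.exists_lag_le_four x.2
  have hlead : ∀ i, l i = 0 → HasIndex φ x 0 (z i) := fun i hi =>
    (hi ▸ hz i : TrailsBy φ x 0 (z i)).hasIndex_zero hG
  refine .of_isZombieMove hG (fun _ _ _ => id) (l · = 0) (fun _ => φ (.inner x 1))
    (fun i hi => hA.isZombieMove_inner hG (hlead i hi) hs (by decide) (by decide) (by decide))
    fun z' hz' hz'l s' hs' hfar => ?_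
  have hrest : ∀ i e, l i = e + 1 → TrailsBy φ x e (z' i) := fun i e hi =>
    (hz i).of_isZombieMove hA hG x.2.le hi.symm hs.mem_armBeyond (hz' i)
  rcases hA.adjOrEq_cases_of_inner hs hs' (hz'l p hp) (hfar p) with
    ⟨j, h2j, h1j, hj⟩ | ⟨hne, -⟩ | ⟨-, rfl⟩
  · obtain rfl : j = 3 := by clear * - h2j h1j; decide +revert
    exact hA.zombiesWin_of_index_one hG (Or.inl (hz'l p hp)) hj (hrest q (l q - 1) (by omega))
      (by omega)
  · exact absurd hne (by decide)
  · exact h.pursuersWin_of_leaders_index_one hA hG hl (fun i hi => Or.inl (hz'l i hi)) hrest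
      b0_mem_armBeyond

theorem pursuersWin_of_mem_armBeyond_succ (h : LineupWins φ J (x + 1) 2)
    (hA : IsPendantArm φ root) (hG : G.Connected) (hl : WellSpaced n x l)
    (hz : ∀ i, TrailsBy φ x (l i) (z i)) (hs : s ∈ armBeyond φ (x + 1)) :
    PursuersWin G (IsZombieMove G) z s := by
  obtain ⟨p, hp⟩ := hl.zero
  have hlead : ∀ i, l i = 0 → HasIndex φ x 0 (z i) := fun i hi =>
    (hi ▸ hz i : TrailsBy φ x 0 (z i)).hasIndex_zero hG
  have hmove : ∀ i, l i = 0 → IsZombieMove G (z i) s (φ (.inner x 1)) := fun i hi => by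
    refine (hA.isCut_compl_armBeyond (x := x + 1) x.2).isZombieMove hG
      (hlead i hi).notMem_armBeyond_succ (HasIndex.inner x 1).notMem_armBeyond_succ
      (not_not.2 hs) ?_
    rw [b2prev_succ x.2]
    exact hA.isZombieMove_inner hG (hlead i hi) (.outer x 2) (by decide) (by decide) (by decide)
  refine .of_isZombieMove hG (fun _ _ _ => id) (l · = 0) (fun _ => φ (.inner x 1)) hmove
    fun z' hz' hz'l s' hs' hfar => ?_
  have hrest : ∀ i e, l i = e + 1 → TrailsBy φ x e (z' i) := fun i e hi =>
    (hz i).of_isZombieMove hA hG x.2.le hi.symm (armBeyond_anti (Nat.le_succ x) hs) (hz' i)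
  obtain hs'x | ⟨rfl, -⟩ := hA.mem_armBeyond_of_adjOrEq (x := x + 1) x.2 hs hs'
  · exact h.pursuersWin_of_leaders_index_one hA hG hl (fun i hi => Or.inl (hz'l i hi)) hrest hs'x
  · refine absurd ?_ (hfar p)
    rw [hz'l p hp, b2prev_succ x.2]
    exact (HasIndex.inner x 1).adjOrEq (.outer x 2) (by decide)

/-- Running to index `4` has cost the leaders a step on the others. -/
theorem pursuersWin_of_leaders_index_four (h : LineupWins φ J (x + 1) 2)
    (hA : IsPendantArm φ root) (hG : G.Connected) (hl : WellSpaced n x l)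
    (hlead : ∀ i, l i = 0 → HasIndex φ x 4 (z i))
    (hrest : ∀ i e, l i = e + 1 → TrailsBy φ x e (z i)) (hs : HasIndex φ x 2 s) :
    PursuersWin G (IsZombieMove G) z s := by
  obtain ⟨p, hp⟩ := hl.zero
  obtain ⟨q, hq⟩ := hl.exists_lag_le_four x.2
  refine .of_isZombieMove hG (fun _ _ _ => id) (l · ≤ 1)
    (fun i => if l i = 0 then φ (.inner x 3) else φ (.inner x 1)) (fun i hi => ?_)
    fun z' hz' hz'l s' hs' hfar => ?_
  · obtain hi | hi : l i = 0 ∨ l i = 1 := by omega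
    · simpa [hi] using
        hA.isZombieMove_inner hG (hlead i hi) hs (by decide) (by decide) (by decide)
    · simpa [hi] using hA.isZombieMove_inner hG ((hrest i 0 hi).hasIndex_zero hG) hs
        (by decide) (by decide) (by decide)
  have hlead' : ∀ i, l i = 0 → z' i = φ (.inner x 3) := fun i hi => by
    simpa [hi] using hz'l i (by omega)
  have hsecond : ∀ i, l i = 1 → z' i = φ (.inner x 1) := fun i hi => by
    simpa [hi] using hz'l i (by omega)
  have hrest' : ∀ i e, l i = e + 2 → TrailsBy φ x e (z' i) := fun i e hi =>
    (hrest i (e + 1) hi).of_isZombieMove hA hG x.2.le rfl hs.mem_armBeyond (hz' i)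
  rcases hA.adjOrEq_cases_of_inner hs hs' (hlead' p hp) (hfar p) with
    ⟨j, h2j, h3j, hj⟩ | ⟨hne, -⟩ | ⟨-, rfl⟩
  · obtain rfl : j = 1 := by clear * - h2j h3j; decide +revert
    obtain hq1 | hq2 : l q = 1 ∨ 2 ≤ l q := by omega
    · exact IsPendantArm.zombiesWin_of_near hG (Or.inl (hsecond q hq1)) hj (by decide)
    · exact hA.zombiesWin_of_adj_index_zero hG (by decide) (by decide) (Or.inl (hlead' p hp)) hj
        (hrest' q (l q - 2) (by omega)) (by omega)
  · exact absurd hne (by decide)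
  · refine h hl.succ_pred b0_mem_armBeyond fun i => ?_
    obtain hi | hi | ⟨e, hi⟩ : l i = 0 ∨ l i = 1 ∨ ∃ e, l i = e + 2 := by
      rcases l i with _ | _ | e <;> simp
    · rw [hi]
      exact .of_hasIndex hA hG (Or.inl (hlead' i hi)) (by decide)
    · rw [hi]
      exact .of_hasIndex hA hG (Or.inl (hsecond i hi)) (by decide)
    · rw [hi, show 2 + (e + 2 - 1) = e + 3 by omega]
      exact (hrest' i e hi).succ hA hG

theorem pursuersWin_of_index_three (h : LineupWins φ J (x + 1) 2) (hA : IsPendantArm φ root)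
    (hG : G.Connected) (hl : WellSpaced n x l) (hz : ∀ i, TrailsBy φ x (l i) (z i))
    (hs : HasIndex φ x 3 s) : PursuersWin G (IsZombieMove G) z s := by
  obtain ⟨p, hp⟩ := hl.zero
  have hlead : ∀ i, l i = 0 → HasIndex φ x 0 (z i) := fun i hi =>
    (hi ▸ hz i : TrailsBy φ x 0 (z i)).hasIndex_zero hG
  refine .of_isZombieMove hG (fun _ _ _ => id) (l · = 0) (fun _ => φ (.inner x 4))
    (fun i hi => hA.isZombieMove_inner hG (hlead i hi) hs (by decide) (by decide) (by decide))
    fun z' hz' hz'l s' hs' hfar => ?_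
  have hrest : ∀ i e, l i = e + 1 → TrailsBy φ x e (z' i) := fun i e hi =>
    (hz i).of_isZombieMove hA hG x.2.le hi.symm hs.mem_armBeyond (hz' i)
  rcases hA.adjOrEq_cases_of_inner hs hs' (hz'l p hp) (hfar p) with
    ⟨j, h3j, h4j, hj⟩ | ⟨hne, -⟩ | ⟨hne, -⟩
  · obtain rfl : j = 2 := by clear * - h3j h4j; decide +revert
    exact h.pursuersWin_of_leaders_index_four hA hG hl (fun i hi => Or.inl (hz'l i hi)) hrest hj
  all_goals exact absurd hne (by decide)

theorem of_succ (h : LineupWins φ J (x + 1) 2) (hA : IsPendantArm φ root) (hG : G.Connected) :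
    LineupWins φ J x 0 := by
  intro z s l hl hs hz
  simp only [zero_add] at hz
  obtain ⟨p, hp⟩ := hl.zero
  have hp0 : TrailsBy φ x 0 (z p) := hp ▸ hz p
  obtain ⟨i, hi⟩ | rfl | hs := mem_armBeyond_cases hs
  · obtain hi0 | rfl | rfl : Fin5Near 0 i ∨ i = 2 ∨ i = 3 := by clear * -; decide +revert
    · exact IsPendantArm.zombiesWin_of_near hG (hp0.hasIndex_zero hG) hi hi0
    · exact h.pursuersWin_of_index_two hA hG hl hz hi
    · exact h.pursuersWin_of_index_three hA hG hl hz hi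
  · obtain ⟨q, hq, hq4⟩ := hl.exists_lag_le_four x.2
    have hq' : TrailsBy φ x (l q - 1 + 1) (z q) := by
      rw [Nat.sub_add_cancel hq]
      exact hz q
    exact hA.zombiesWin_of_center hG hp0 hq' (by omega)
  · exact h.pursuersWin_of_mem_armBeyond_succ hA hG hl hz hs

end Step

end LineupWins

theorem IsPendantArm.lineupWins (hA : IsPendantArm φ root) (hG : G.Connected) {x : ℕ}
    (hx : x ≤ n) : LineupWins φ J x 2 := by
  induction hx using Nat.decreasingInduction with
  | self =>
    exact ((LineupWins.self hG).succ_dist hA hG le_rfl zero_le_one).succ_dist hA hG le_rfl le_rfl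
  | of_succ x hx ih =>
    have h0 : LineupWins φ J x 0 := .of_succ (x := ⟨x, hx⟩) ih hA hG
    exact (h0.succ_dist hA hG hx.le zero_le_one).succ_dist hA hG hx.le le_rfl

end ZombiesOnArm

/-! ### A cop wins on an arm -/

section CopOnArm

variable {V : Type*} {G : SimpleGraph V} {n : ℕ} {φ : armGraph n ↪g G} {root : V} {J : ℕ}
  {z : Fin J → V} {s : V} {p : Fin J}

/-- The cops win as soon as one of them is at `b₀ˣ` with the robber past `b₀ˣ`. -/
def CopWinsFrom (φ : armGraph n ↪g G) (J x : ℕ) : Prop :=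
  ∀ ⦃z : Fin J → V⦄ ⦃s : V⦄ ⦃p : Fin J⦄, z p = φ (b0 n x) → s ∈ armBeyond φ x →
    PursuersWin G (IsCopMove G) z s

theorem copsWin_of_adjOrEq (hG : G.Connected) (h : AdjOrEq G (z p) s) :
    PursuersWin G (IsCopMove G) z s :=
  .of_adjOrEq hG (fun _ _ _ => IsZombieMove.isCopMove) h

namespace CopWinsFrom

theorem self : CopWinsFrom φ J n := by
  intro z s p hp hs
  rw [armBeyond_self, Set.mem_singleton_iff] at hs
  exact .caught p (hp.trans hs.symm)

theorem pursuersWin_of_b2prev {x : ℕ} (h : CopWinsFrom φ J x) (hA : IsPendantArm φ root)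
    (hG : G.Connected) (hx : x ≤ n) (hp : z p = φ (b2prev n x)) (hs : s ∈ armBeyond φ x) :
    PursuersWin G (IsCopMove G) z s := by
  refine .of_cop_move p (hp ▸ Or.inr (adj_b2prev_b0 hx)) fun s' hs' => ?_
  obtain hs'x | ⟨rfl, -⟩ := hA.mem_armBeyond_of_adjOrEq hx hs hs'
  · exact h (Function.update_self p _ z) hs'x
  · refine copsWin_of_adjOrEq hG (p := p) ?_
    rw [Function.update_self]
    exact Or.inr (adj_b2prev_b0 hx).symm

theorem pursuersWin_of_adj_b2prev {x : ℕ} (h : CopWinsFrom φ J x) (hA : IsPendantArm φ root)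
    (hG : G.Connected) (hx : x ≤ n) (hp : G.Adj (z p) (φ (b2prev n x)))
    (hs : s ∈ armBeyond φ x) : PursuersWin G (IsCopMove G) z s := by
  refine .of_cop_move p (Or.inr hp) fun s' hs' => ?_
  obtain hs'x | ⟨rfl, -⟩ := hA.mem_armBeyond_of_adjOrEq hx hs hs'
  · exact h.pursuersWin_of_b2prev hA hG hx (Function.update_self p _ z) hs'x
  · exact .caught p (Function.update_self p _ z)

section Step

variable {x : Fin n}

theorem pursuersWin_of_inner_two (h : CopWinsFrom φ J (x + 1)) (hA : IsPendantArm φ root)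
    (hG : G.Connected) (hp : z p = φ (.inner x 2)) (hs : s ∈ armBeyond φ (x + 1)) :
    PursuersWin G (IsCopMove G) z s := by
  refine h.pursuersWin_of_adj_b2prev hA hG (p := p) x.2 ?_ hs
  rw [hp, b2prev_succ x.2]
  exact ((HasIndex.inner x 2).adjOrEq (.outer x 2) (Or.inl rfl)).resolve_left (by simp)

theorem pursuersWin_of_center_of_mem (h : CopWinsFrom φ J (x + 1)) (hA : IsPendantArm φ root)
    (hG : G.Connected) (hp : z p = φ (.center x)) (hs : s ∈ armBeyond φ (x + 1)) :
    PursuersWin G (IsCopMove G) z s := by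
  refine .of_cop_move p (hp ▸ Or.inr (adj_inner_center x 2).symm) fun s' hs' => ?_
  obtain hs'x | ⟨rfl, -⟩ := hA.mem_armBeyond_of_adjOrEq (x := x + 1) x.2 hs hs'
  · exact h.pursuersWin_of_inner_two hA hG (Function.update_self p _ z) hs'x
  · refine copsWin_of_adjOrEq hG (p := p) ?_
    rw [Function.update_self, b2prev_succ x.2]
    exact (HasIndex.inner x 2).adjOrEq (.outer x 2) (Or.inl rfl)

theorem pursuersWin_of_center_of_index (h : CopWinsFrom φ J (x + 1)) (hA : IsPendantArm φ root)
    (hG : G.Connected) {j : Fin 5} (hj : j ≠ 0) (hp : z p = φ (.center x))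
    (hs : HasIndex φ x j s) : PursuersWin G (IsCopMove G) z s := by
  refine .of_cop_move p (hp ▸ Or.inr (adj_inner_center x j).symm) fun s' hs' => ?_
  by_cases hnear : AdjOrEq G (φ (.inner x j)) s'
  · exact copsWin_of_adjOrEq hG (p := p) (by rwa [Function.update_self])
  obtain ⟨l, hjl, hjl', -⟩ | ⟨hj0, -⟩ | ⟨rfl, rfl⟩ := hA.adjOrEq_cases_of_inner hs hs' rfl hnear
  · exact absurd hjl hjl'
  · exact absurd hj0 hj
  · exact h.pursuersWin_of_inner_two hA hG (Function.update_self p _ z) b0_mem_armBeyond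

theorem pursuersWin_of_inner_zero (h : CopWinsFrom φ J (x + 1)) (hA : IsPendantArm φ root)
    (hG : G.Connected) (hp : z p = φ (.inner x 0)) (hs : s ∈ armBeyond φ x) :
    PursuersWin G (IsCopMove G) z s := by
  by_cases hnear : AdjOrEq G (z p) s
  · exact copsWin_of_adjOrEq hG hnear
  refine .of_cop_move p (hp ▸ Or.inr (adj_inner_center x 0)) fun s' hs' => ?_
  have hp' : Function.update z p (φ (.center x)) p = φ (.center x) := Function.update_self p _ z
  obtain ⟨j, hj⟩ | rfl | hsx := mem_armBeyond_cases hs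
  · rw [hp, hA.adjOrEq_iff_near (.inner x 0) hj] at hnear
    rcases hA.adjOrEq_cases hj hs' with ⟨l, hjl, hl⟩ | ⟨-, rfl⟩ | ⟨-, rfl, -⟩ | ⟨-, -, rfl⟩
    · refine h.pursuersWin_of_center_of_index hA hG ?_ hp' hl
      rintro rfl
      exact hnear (fin5Near_comm.1 hjl)
    · exact .caught p hp'
    · exact absurd (Or.inl rfl) hnear
    · exact h.pursuersWin_of_center_of_mem hA hG hp' b0_mem_armBeyond
  · exact absurd (hp ▸ Or.inr (adj_inner_center x 0)) hnear
  · obtain hs'x | ⟨rfl, -⟩ := hA.mem_armBeyond_of_adjOrEq (x := x + 1) x.2 hsx hs'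
    · exact h.pursuersWin_of_center_of_mem hA hG hp' hs'x
    · refine h.pursuersWin_of_center_of_index hA hG (j := 2) (by decide) hp' ?_
      rw [b2prev_succ x.2]
      exact .outer x 2

theorem of_succ (h : CopWinsFrom φ J (x + 1)) (hA : IsPendantArm φ root) (hG : G.Connected) :
    CopWinsFrom φ J x := by
  intro z s p hp hs
  by_cases hc : z p = s
  · exact .caught p hc
  have hadj : AdjOrEq G (z p) (φ (.inner x 0)) :=
    hp ▸ (HasIndex.b0 x).adjOrEq (.inner x 0) (Or.inl rfl)
  refine .of_cop_move p hadj fun s' hs' => ?_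
  obtain hs'x | ⟨-, rfl⟩ := hA.mem_armBeyond_of_adjOrEq x.2.le hs hs'
  · exact h.pursuersWin_of_inner_zero hA hG (Function.update_self p _ z) hs'x
  · exact absurd hp hc

end Step

end CopWinsFrom

namespace IsPendantArm

theorem copWinsFrom (hA : IsPendantArm φ root) (hG : G.Connected) {x : ℕ} (hx : x ≤ n) :
    CopWinsFrom φ J x := by
  induction hx using Nat.decreasingInduction with
  | self => exact .self
  | of_succ x hx ih => exact .of_succ (x := ⟨x, hx⟩) ih hA hG

theorem copsWin_of_root (hA : IsPendantArm φ root) (hG : G.Connected) (hp : z p = root)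
    (hs : s ∈ Set.range φ) : PursuersWin G (IsCopMove G) z s := by
  obtain ⟨t, rfl⟩ := hs
  have hadj : G.Adj (z p) (φ .start) := hp ▸ hA.adj_start
  obtain rfl | ht := eq_or_ne t .start
  · exact copsWin_of_adjOrEq hG (Or.inr hadj)
  · exact (hA.copWinsFrom hG n.zero_le).pursuersWin_of_adj_b2prev hA hG n.zero_le
      (by rwa [b2prev_zero]) (apply_mem_armBeyond_iff.2 (ArmVert.isBeyond_zero_iff.2 ht))

end IsPendantArm

end CopOnArm

/-! ### A survivor escapes along an arm -/

section SurvivorOnArm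

variable {V : Type*} {G : SimpleGraph V} {n : ℕ} {φ : armGraph n ↪g G} {root : V} {J : ℕ}
  {z z' : Fin J → V} {s : V} {l : Fin J → ℕ}

/-- At most `(n - x - M - 1) / 4` of the lags exceed `M`, for some `M ≤ 4`. A survivor in `T_x`
facing zombies with such lags gets to a copy in which nobody lags behind by `1, …, 4` before
running out of arm. -/
def LagBudget (n x : ℕ) (l : Fin J → ℕ) : Prop :=
  ∃ M ≤ 4, ∃ S : Finset (Fin J), (∀ i ∉ S, l i ≤ M) ∧ M + 4 * S.card + x + 1 ≤ n

namespace LagBudget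

variable {x : ℕ}

theorem lt (h : LagBudget n x l) : x < n := by
  obtain ⟨M, -, S, -, h⟩ := h
  omega

theorem mono {l' : Fin J → ℕ} (h : LagBudget n x l) (hl : ∀ i, l' i ≤ l i) : LagBudget n x l' := by
  obtain ⟨M, hM, S, hS, h⟩ := h
  exact ⟨M, hM, S, fun i hi => (hl i).trans (hS i hi), h⟩

theorem succ_pred (h : LagBudget n x l) {i : Fin J} (hi : 1 ≤ l i) (hi4 : l i ≤ 4) :
    LagBudget n (x + 1) fun i => l i - 1 := by
  classical
  obtain ⟨_ | M, hM, S, hS, h⟩ := h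
  · have hiS : i ∈ S := by_contra fun hiS => by have := hS i hiS; omega
    have hcard := Finset.card_erase_add_one hiS
    refine ⟨3, by omega, S.erase i, fun i' hi' => ?_, by omega⟩
    obtain rfl | hne := eq_or_ne i' i
    · exact Nat.sub_le_of_le_add hi4
    · have := hS i' fun h => hi' (Finset.mem_erase.2 ⟨hne, h⟩)
      exact (Nat.sub_le _ _).trans (by omega)
  · refine ⟨M, by omega, S, fun i' hi' => ?_, by omega⟩
    exact Nat.sub_le_of_le_add (hS i' hi')

theorem of_le_card {k m : ℕ} (hJ : J < m) (hn : 4 * (m - k) ≤ n) {C : Finset (Fin J)}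
    (hC : k ≤ C.card) (hl : ∀ i ∈ C, l i ≤ 3) : LagBudget n 0 l := by
  refine ⟨3, by omega, Cᶜ, fun i hi => hl i (by simpa using hi), ?_⟩
  have := C.card_compl_add_card
  rw [Fintype.card_fin] at this
  omega

end LagBudget

/-- A zombie with lag `l` behind a survivor who circles through the outside vertices
`b₀, b₄, b₃, b₂, b₁` of `T_x` and is at `b_{-t}^x`: it trails so as to reach `b₀ˣ` once the survivor
is `2 + l` steps past that vertex, or it has closed up and has index `2 - t`. -/
def Chasing (φ : armGraph n ↪g G) (x : Fin n) (t : Fin 5) (l : ℕ) (z : V) : Prop :=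
  (∃ e, TrailsBy φ x e z ∧ e + t = 2 + l) ∨ (l = 0 ∧ HasIndex φ x (2 - t) z)

theorem not_fin5Near_chase (t : Fin 5) : ¬ Fin5Near (2 - t) (-t) := by decide +revert

namespace Chasing

variable {x : Fin n} {t : Fin 5} {l : ℕ} {z z' : V}

theorem not_adjOrEq (hA : IsPendantArm φ root) (hG : G.Connected) (hl : t = 4 → l = 0 ∨ 5 ≤ l)
    (h : Chasing φ x t l z) : ¬ AdjOrEq G z (φ (.outer x (-t))) := by
  have hs : HasIndex φ x (-t) (φ (.outer x (-t))) := .outer x (-t)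
  obtain ⟨e, he, het⟩ | ⟨rfl, hi⟩ := h
  · rw [adjOrEq_iff_dist_le_one hG, he.dist_eq hA hG x.2.le hs.mem_armBeyond]
    have hb := HasIndex.b0 (φ := φ) x
    have hpos (ht : t ≠ 0) : 0 < G.dist (φ (b0 n x)) (φ (.outer x (-t))) :=
      hG.pos_dist_of_ne (hb.ne hs (neg_ne_zero.2 ht).symm)
    have not_near : ∀ t : Fin 5, t = 2 ∨ t = 3 → ¬ Fin5Near 0 (-t) := by decide
    have htwo (ht : t = 2 ∨ t = 3) : G.dist (φ (b0 n x)) (φ (.outer x (-t))) = 2 :=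
      hA.dist_of_not_near hG hb hs (not_near t ht)
    fin_cases t <;> simp_all <;> omega
  · rw [hA.adjOrEq_iff_near hi hs]
    exact not_fin5Near_chase t

theorem hasIndex_succ (hA : IsPendantArm φ root) (hG : G.Connected) (hz : HasIndex φ x (2 - t) z)
    (hm : IsZombieMove G z (φ (.outer x (-t))) z') : HasIndex φ x (2 - (t + 1)) z' := by
  have forced : ∀ t l' : Fin 5, Fin5Near (2 - t) l' → Fin5Near (-t) l' → l' = 2 - (t + 1) := by
    decide
  exact hA.hasIndex_of_isZombieMove hG hz (not_fin5Near_chase t) (forced t) hm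

theorem succ (hA : IsPendantArm φ root) (hG : G.Connected) (ht : t ≠ 4)
    (hl : t = 3 → l = 0 ∨ 2 ≤ l) (h : Chasing φ x t l z)
    (hm : IsZombieMove G z (φ (.outer x (-t))) z') : Chasing φ x (t + 1) l z' := by
  have ht' : ((t + 1 : Fin 5) : ℕ) = t + 1 := Fin.val_add_one_of_lt' (by omega)
  obtain ⟨_ | e, he, het⟩ | ⟨rfl, hi⟩ := h
  · obtain ⟨rfl, rfl⟩ : t = 2 ∧ l = 0 := by omega
    exact Or.inr ⟨rfl, hasIndex_succ hA hG (he.hasIndex_zero hG) hm⟩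
  · have hs : HasIndex φ x (-t) (φ (.outer x (-t))) := .outer x (-t)
    exact Or.inl ⟨e, he.of_isZombieMove hA hG x.2.le rfl hs.mem_armBeyond hm, by omega⟩
  · exact Or.inr ⟨rfl, hasIndex_succ hA hG hi hm⟩

theorem wrap (hA : IsPendantArm φ root) (hG : G.Connected) (hl : l = 0 ∨ 5 ≤ l)
    (h : Chasing φ x 4 l z) (hm : IsZombieMove G z (φ (.outer x (-4))) z') :
    Chasing φ x 0 (l - 5) z' := by
  obtain ⟨_ | e, he, het⟩ | ⟨rfl, hi⟩ := h
  · simp at het; omega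
  · have hs : HasIndex φ x (-4) (φ (.outer x (-4))) := .outer x (-4)
    refine Or.inl ⟨e, he.of_isZombieMove hA hG x.2.le rfl hs.mem_armBeyond hm, ?_⟩
    simp at het ⊢; omega
  · exact Or.inr ⟨rfl, hasIndex_succ hA hG hi hm⟩

theorem trailsBy_succ (hA : IsPendantArm φ root) (hG : G.Connected) (h : Chasing φ x 3 l z)
    (hm : IsZombieMove G z (φ (.outer x 2)) z') : TrailsBy φ (x + 1) (2 + (l - 1)) z' := by
  obtain ⟨_ | e, he, het⟩ | ⟨rfl, hi⟩ := h
  · obtain rfl : l = 1 := by simp at het; omega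
    have := hA.hasIndex_of_isZombieMove hG (he.hasIndex_zero hG) (l := 1) (by decide) (by decide) hm
    exact .of_hasIndex hA hG this (by decide)
  · have hs : HasIndex φ x 2 (φ (.outer x 2)) := .outer x 2
    have := (he.of_isZombieMove hA hG x.2.le rfl hs.mem_armBeyond hm).succ hA hG
    rwa [show e + 3 = 2 + (l - 1) by simp at het; omega] at this
  · exact .of_hasIndex hA hG (hasIndex_succ hA hG hi hm) (by decide)

end Chasing

/-- The positions, with the zombies to move, of a survivor evading on the arm: entering it at `b₂⁻¹`
with every zombie behind, or circling through the outside vertices of some `T_x`. -/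
inductive ArmEvasion (φ : armGraph n ↪g G) (z : Fin J → V) : V → Prop
  | start (l : Fin J → ℕ) (hz : ∀ i, TrailsBy φ 0 (3 + l i) (z i)) (hl : LagBudget n 0 l) :
      ArmEvasion φ z (φ .start)
  | outer (x : Fin n) (t : Fin 5) (l : Fin J → ℕ) (ht : t = 4 → ∀ i, l i = 0 ∨ 5 ≤ l i)
      (hz : ∀ i, Chasing φ x t (l i) (z i)) (hl : LagBudget n x l) :
      ArmEvasion φ z (φ (.outer x (-t)))

theorem TrailsBy.isZombieMove_b0 (hA : IsPendantArm φ root) (hG : G.Connected) {e : ℕ} {u v : V}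
    (h : TrailsBy φ 0 (e + 1) u) (hm : IsZombieMove G u (φ .start) v) :
    IsZombieMove G u (φ (b0 n 0)) v := by
  have hcut := hA.isCut_compl_armBeyond n.zero_le
  have hu : u ∉ armBeyond φ 0 := h.1.resolve_left (by rintro rfl; simpa using h.2)
  rw [b2prev_zero] at hcut
  refine hcut.isZombieMove hG hu (fun hv => ?_) (not_not.2 b0_mem_armBeyond) hm
  obtain rfl := hcut hu (not_not.2 hv) hm.1
  simpa using hm.2

namespace ArmEvasion

theorem of_trailsBy {x : ℕ} (hz : ∀ i, TrailsBy φ x (2 + l i) (z i)) (hl : LagBudget n x l) :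
    ArmEvasion φ z (φ (b0 n x)) := by
  rw [b0_of_lt hl.lt]
  exact .outer ⟨x, hl.lt⟩ 0 l (fun h => absurd h (by decide)) (fun i => Or.inl ⟨_, hz i, rfl⟩) hl

theorem not_adjOrEq (hA : IsPendantArm φ root) (hG : G.Connected) (h : ArmEvasion φ z s)
    (i : Fin J) : ¬ AdjOrEq G (z i) s := by
  cases h with
  | start l hz hl =>
    intro hs
    have hle := hs.dist_le hG (φ (b0 n 0))
    have hb : G.Adj (φ .start) (φ (b0 n 0)) := b2prev_zero ▸ adj_b2prev_b0 n.zero_le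
    rw [(hz i).2, dist_eq_one_iff_adj.2 hb] at hle
    omega
  | outer x t l ht hz hl => exact (hz i).not_adjOrEq hA hG fun h => ht h i

theorem exists_response_outer (hA : IsPendantArm φ root) (hG : G.Connected) {x : Fin n} {t : Fin 5}
    (ht : t = 4 → ∀ i, l i = 0 ∨ 5 ≤ l i) (hz : ∀ i, Chasing φ x t (l i) (z i))
    (hl : LagBudget n x l) (hz' : ∀ i, IsZombieMove G (z i) (φ (.outer x (-t))) (z' i)) :
    ∃ s', AdjOrEq G (φ (.outer x (-t))) s' ∧ ArmEvasion φ z' s' := by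
  have hcircle : G.Adj (φ (.outer x (-t))) (φ (.outer x (-(t + 1)))) := by
    have consecutive : ∀ t : Fin 5, fin5adj (-t) (-(t + 1)) := by decide
    exact (HasIndex.outer x (-t)).adj (.outer x _) (consecutive t)
  obtain rfl | ht4 := eq_or_ne t 4
  · exact ⟨_, Or.inr hcircle, .outer x 0 _ (fun h => absurd h (by decide))
      (fun i => (hz i).wrap hA hG (ht rfl i) (hz' i)) (hl.mono fun _ => Nat.sub_le _ _)⟩
  by_cases hexit : t = 3 ∧ ∃ i, 1 ≤ l i ∧ l i ≤ 4
  · obtain ⟨rfl, i, hi, hi4⟩ := hexit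
    refine ⟨φ (b0 n (x + 1)), Or.inr ?_, of_trailsBy
      (fun i => (hz i).trailsBy_succ hA hG (hz' i)) (hl.succ_pred hi hi4)⟩
    rw [show (-3 : Fin 5) = 2 by decide]
    simpa [b2prev_succ x.2] using adj_b2prev_b0 (φ := φ) (x := x + 1) x.2
  · have hl3 : t = 3 → ∀ i, l i = 0 ∨ 5 ≤ l i := fun h3 i => by
      by_contra h
      exact hexit ⟨h3, i, by omega, by omega⟩
    refine ⟨_, Or.inr hcircle, .outer x (t + 1) l
      (fun h => hl3 (by clear * - h; decide +revert)) (fun i => ?_) hl⟩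
    exact (hz i).succ hA hG ht4 (fun h => (hl3 h i).imp_right (by omega)) (hz' i)

theorem isEvasionInvariant (hA : IsPendantArm φ root) (hG : G.Connected) :
    IsEvasionInvariant G (IsZombieMove G) (ArmEvasion φ (J := J)) where
  safe _ _ h := h.not_adjOrEq hA hG
  respond z s z' h hz' := by
    cases h with
    | start l hz hl =>
      refine ⟨φ (b0 n 0), Or.inr (b2prev_zero ▸ adj_b2prev_b0 n.zero_le), of_trailsBy
        (fun i => (hz i).of_isZombieMove hA hG n.zero_le (by omega) b0_mem_armBeyond ?_) hl⟩
      have : TrailsBy φ 0 (2 + l i + 1) (z i) := by convert hz i using 1; omega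
      exact this.isZombieMove_b0 hA hG (hz' i)
    | outer x t l ht hz hl => exact exists_response_outer hA hG ht hz hl hz'

end ArmEvasion

end SurvivorOnArm

/-! ### The base graph with its paths and arms -/

section ArmedGraph

/-- The graph obtained from `H` by attaching to each vertex a path on `n` vertices and `m` copies of
the arm graph `A_n`; thus `Z_{k,m}(H)` is `armedGraph H m (4 * (m - k))`. -/
def armedGraph {W : Type*} (H : SimpleGraph W) (m n : ℕ) : SimpleGraph (ZVert W m n) :=
  fromRel (zRel H m n)

variable {W : Type*} {H : SimpleGraph W} {m n : ℕ}

/-- The vertex of `H` to which the path or arm containing a given vertex is attached. -/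
def basePoint : ZVert W m n → W
  | .inl w => w
  | .inr (.inl (w, _)) => w
  | .inr (.inr (w, _, _)) => w

/-- The vertex at distance `j ≤ n` from `w` on the path attached to `w`. Junk value `w` for
`j > n`. -/
def pathVert (w : W) : ℕ → ZVert W m n
  | 0 => .inl w
  | j + 1 => if h : j < n then .inr (.inl (w, ⟨j, h⟩)) else .inl w

/-- The number of steps along an attached path from its base vertex, and `0` off these paths. -/
def pathDepth : ZVert W m n → ℕ
  | .inr (.inl (_, j)) => j + 1
  | _ => 0

theorem armedGraph_adj_inl_inl {u w : W} : (armedGraph H m n).Adj (.inl u) (.inl w) ↔ H.Adj u w :=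
  ⟨fun h => h.2.elim id Adj.symm, fun h => ⟨fun he => h.ne (Sum.inl_injective he), Or.inl h⟩⟩

theorem adjOrEq_inl_inl {u w : W} :
    AdjOrEq (armedGraph H m n) (.inl u) (.inl w) ↔ AdjOrEq H u w := by
  simp [AdjOrEq, armedGraph_adj_inl_inl]

theorem basePoint_of_adj {u v : ZVert W m n} (h : (armedGraph H m n).Adj u v) :
    basePoint u = basePoint v ∨
      (u = .inl (basePoint u) ∧ v = .inl (basePoint v) ∧ H.Adj (basePoint u) (basePoint v)) := by
  rcases u with u | ⟨u, i⟩ | ⟨u, a, s⟩ <;> rcases v with v | ⟨v, j⟩ | ⟨v, b, t⟩ <;>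
    grind [armedGraph, fromRel_adj, zRel, basePoint, H.adj_comm]

theorem basePoint_of_adjOrEq {u v : ZVert W m n} (h : AdjOrEq (armedGraph H m n) u v) :
    basePoint u = basePoint v ∨
      (u = .inl (basePoint u) ∧ v = .inl (basePoint v) ∧ H.Adj (basePoint u) (basePoint v)) := by
  rcases h with rfl | h
  · exact Or.inl rfl
  · exact basePoint_of_adj h

theorem adjOrEq_basePoint {u v : ZVert W m n} (h : AdjOrEq (armedGraph H m n) u v) :
    AdjOrEq H (basePoint u) (basePoint v) :=
  (basePoint_of_adjOrEq h).imp Eq.symm fun h => h.2.2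

theorem adjOrEq_inl_basePoint {u : ZVert W m n} {b : W}
    (h : AdjOrEq (armedGraph H m n) u (.inl b)) :
    AdjOrEq (armedGraph H m n) u (.inl (basePoint u)) := by
  rcases basePoint_of_adjOrEq h with heq | ⟨heq, -⟩
  · rwa [heq]
  · rw [← heq]
    exact .refl u

/-- The copy of the arm graph with label `a` at the vertex `w`. -/
def armEmb (H : SimpleGraph W) (w : W) (a : Fin m) : armGraph n ↪g armedGraph H m n where
  toFun t := .inr (.inr (w, a, t))
  inj' s t h := by simpa using h
  map_rel_iff' :=
    ⟨fun h => h.2.elim (fun h => h.2.2) fun h => h.2.2.symm,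
      fun h => ⟨fun he => h.ne (by simpa using he), Or.inl ⟨rfl, rfl, h⟩⟩⟩

theorem basePoint_armEmb (w : W) (a : Fin m) (t : ArmVert n) : basePoint (armEmb H w a t) = w := rfl

theorem isPendantArm_armEmb (w : W) (a : Fin m) :
    IsPendantArm (armEmb H w a : armGraph n ↪g armedGraph H m n) (.inl w) where
  adj_start := ⟨nofun, Or.inl ⟨rfl, rfl⟩⟩
  eq_of_adj t u h hu := by
    have hu' : ∀ t', u ≠ .inr (.inr (w, a, t')) := fun t' ht' => hu ⟨t', ht'.symm⟩
    rcases u with u | ⟨u, i⟩ | ⟨u, b, s⟩ <;>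
      grind [armEmb, armedGraph, fromRel_adj, zRel, RelEmbedding.coe_mk,
        Function.Embedding.coeFn_mk]

theorem pathVert_zero (w : W) : (pathVert w 0 : ZVert W m n) = .inl w := rfl

theorem basePoint_pathVert (w : W) (j : ℕ) : basePoint (pathVert w j : ZVert W m n) = w := by
  cases j <;> grind [pathVert, basePoint]

theorem pathDepth_pathVert (w : W) {j : ℕ} (hj : j ≤ n) :
    pathDepth (pathVert w j : ZVert W m n) = j := by
  cases j <;> grind [pathVert, pathDepth]

theorem pathDepth_le_of_adj {u v : ZVert W m n} (h : (armedGraph H m n).Adj u v) :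
    pathDepth u ≤ pathDepth v + 1 := by
  rcases u with u | ⟨u, i⟩ | ⟨u, a, s⟩ <;> rcases v with v | ⟨v, j⟩ | ⟨v, b, t⟩ <;>
    grind [armedGraph, fromRel_adj, zRel, pathDepth]

theorem pathVert_adj_succ (w : W) {j : ℕ} (hj : j < n) :
    (armedGraph H m n).Adj (pathVert w j) (pathVert w (j + 1)) := by
  cases j <;> grind [armedGraph, fromRel_adj, zRel, pathVert]

theorem exists_eq_pathVert_of_adjOrEq {w : W} {j : ℕ} (hj : 0 < j) (hjn : j ≤ n)
    {u : ZVert W m n} (h : AdjOrEq (armedGraph H m n) (pathVert w j) u) :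
    ∃ j' ≤ n, j ≤ j' + 1 ∧ u = pathVert w j' := by
  obtain ⟨i, rfl⟩ := Nat.exists_eq_succ_of_ne_zero hj.ne'
  rcases h with rfl | h
  · exact ⟨_, hjn, by omega, rfl⟩
  rcases u with u | ⟨u, l⟩ | ⟨u, a, t⟩
  · refine ⟨0, ?_⟩
    grind [armedGraph, fromRel_adj, zRel, pathVert]
  · refine ⟨l + 1, ?_⟩
    grind [armedGraph, fromRel_adj, zRel, pathVert]
  · grind [armedGraph, fromRel_adj, zRel, pathVert]

theorem pathVert_notMem_range_armEmb (v w : W) (j : ℕ) (a : Fin m) :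
    (pathVert v j : ZVert W m n) ∉ Set.range (armEmb H w a) := by
  rintro ⟨t, ht⟩
  cases j <;> grind [armEmb, pathVert, RelEmbedding.coe_mk, Function.Embedding.coeFn_mk]

theorem zVert_cases (u : ZVert W m n) :
    (∃ j ≤ n, u = pathVert (basePoint u) j) ∨ ∃ a t, u = armEmb H (basePoint u) a t := by
  rcases u with u | ⟨u, j⟩ | ⟨u, a, t⟩
  · exact Or.inl ⟨0, by simp, rfl⟩
  · exact Or.inl ⟨j + 1, j.2, by simp [pathVert, basePoint]⟩
  · exact Or.inr ⟨a, t, rfl⟩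

theorem armedGraph_connected (hH : H.Connected) : (armedGraph H m n).Connected := by
  let inlHom : H →g armedGraph H m n := ⟨.inl, armedGraph_adj_inl_inl.2⟩
  have path_reachable (w : W) (j : ℕ) (hj : j ≤ n) :
      (armedGraph H m n).Reachable (.inl w) (pathVert w j) := by
    induction j with
    | zero => rfl
    | succ j ih => exact (ih (by omega)).trans (pathVert_adj_succ w hj).reachable
  have base_reachable (u : ZVert W m n) :
      (armedGraph H m n).Reachable (.inl (basePoint u)) u := by
    rcases zVert_cases (H := H) u with ⟨j, hj, hu⟩ | ⟨a, t, hu⟩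
    · rw [hu, basePoint_pathVert]
      exact path_reachable _ j hj
    · rw [hu, basePoint_armEmb]
      exact (isPendantArm_armEmb _ a).adj_start.reachable.trans
        (((armGraph_connected n).preconnected .start t).map (armEmb H _ a).toHom)
  obtain ⟨w⟩ := hH.nonempty
  have : Nonempty (ZVert W m n) := ⟨.inl w⟩
  refine ⟨fun u v => (base_reachable u).symm.trans (Reachable.trans ?_ (base_reachable v))⟩
  exact (hH.preconnected _ _).map inlHom

theorem dist_pathVert (hG : (armedGraph H m n).Connected) (w : W) {i j : ℕ} (hij : i ≤ j)
    (hj : j ≤ n) : i + (armedGraph H m n).dist (pathVert w i) (pathVert w j) = j := by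
  apply le_antisymm
  · induction j, hij using Nat.le_induction with
    | base => simp
    | succ j _ ih =>
      have := (AdjOrEq.dist_le hG (Or.inr (pathVert_adj_succ w hj).symm) (pathVert w i))
      rw [dist_comm, dist_comm (u := pathVert w j)] at this
      have := ih (by omega)
      omega
  · have := le_add_dist_of_adj_le hG (fun _ _ => pathDepth_le_of_adj) (pathVert w j) (pathVert w i)
    rwa [pathDepth_pathVert w hj, pathDepth_pathVert w (hij.trans hj), dist_comm] at this

/-- The complement of the path and the arms attached to `w`. -/
def offBranch (w : W) : Set (ZVert W m n) := {u | basePoint u = w → u = .inl w}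

theorem isCut_offBranch (w : W) : IsCut (armedGraph H m n) (offBranch w) (.inl w) := by
  intro u v hu hv h
  obtain ⟨rfl, hv⟩ := Classical.not_imp.1 hv
  rcases basePoint_of_adj h with h | ⟨-, h, -⟩
  · exact hu h
  · exact absurd h hv

theorem mem_offBranch_of_ne {w : W} {u : ZVert W m n} (h : basePoint u ≠ w) : u ∈ offBranch w :=
  fun hu => absurd hu h

theorem notMem_range_armEmb_of_mem_offBranch {w : W} {u : ZVert W m n} (hu : u ∈ offBranch w)
    (a : Fin m) : u ∉ Set.range (armEmb H w a) := by
  rintro ⟨t, rfl⟩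
  cases hu (basePoint_armEmb w a t)

theorem dist_eq_of_mem_offBranch (hG : (armedGraph H m n).Connected) {u s : ZVert W m n}
    (hu : u ∈ offBranch (basePoint s)) :
    (armedGraph H m n).dist u s =
      (armedGraph H m n).dist u (.inl (basePoint s)) +
        (armedGraph H m n).dist (.inl (basePoint s)) s := by
  by_cases hs : s = .inl (basePoint s)
  · rw [← hs]; simp
  · exact (isCut_offBranch _).dist_eq hG hu fun h => hs (h rfl)

theorem dist_inl_inl_le_two {k : ℕ} (hH : IsPursuitBase H k) (hk : 1 ≤ k) (v w : W) :
    (armedGraph H m n).dist (.inl v) (.inl w) ≤ 2 := by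
  have hG := armedGraph_connected (m := m) (n := n) (hH.connected hk)
  by_cases hvw : AdjOrEq H v w
  · exact ((adjOrEq_iff_dist_le_one hG).1 (adjOrEq_inl_inl.2 hvw)).trans one_le_two
  · obtain ⟨f, hf, -⟩ := hH.intercept hvw
    obtain ⟨hv, hw⟩ := hf ⟨0, hk⟩
    exact dist_le (.cons (armedGraph_adj_inl_inl.2 hv) (.cons (armedGraph_adj_inl_inl.2 hw) .nil))

theorem dist_inl_inl_eq_two {k : ℕ} (hH : IsPursuitBase H k) (hk : 1 ≤ k) {v w : W}
    (hvw : ¬ AdjOrEq H v w) : (armedGraph H m n).dist (.inl v) (.inl w) = 2 := by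
  have hG := armedGraph_connected (m := m) (n := n) (hH.connected hk)
  refine (dist_inl_inl_le_two hH hk v w).antisymm (Nat.lt_of_not_le fun h => hvw ?_)
  exact adjOrEq_inl_inl.1 ((adjOrEq_iff_dist_le_one hG).2 h)

theorem dist_inl_le_three {k : ℕ} (hH : IsPursuitBase H k) (hk : 1 ≤ k) {u : ZVert W m n}
    (hu : AdjOrEq (armedGraph H m n) u (.inl (basePoint u))) (b : W) :
    (armedGraph H m n).dist u (.inl b) ≤ 3 := by
  have hG := armedGraph_connected (m := m) (n := n) (hH.connected hk)
  have h₁ := (adjOrEq_iff_dist_le_one hG).1 hu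
  have h₂ := dist_inl_inl_le_two (m := m) (n := n) hH hk (basePoint u) b
  have := hG.dist_triangle (u := u) (v := .inl (basePoint u)) (w := .inl b)
  omega

end ArmedGraph

section LowerBounds

variable {W : Type*} {H : SimpleGraph W} {k m n J : ℕ}

theorem not_copsWinWith_armedGraph (hH : IsPursuitBase H k) (hJ : J < k) :
    ¬ CopsWinWith (armedGraph H m n) J := by
  classical
  have card_lt (z : Fin J → ZVert W m n) : (Finset.univ.image (basePoint ∘ z)).card < k :=
    Finset.card_image_le.trans_lt (by simpa using hJ)
  have mem_image (z : Fin J → ZVert W m n) (i) :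
      basePoint (z i) ∈ Finset.univ.image (basePoint ∘ z) :=
    Finset.mem_image_of_mem _ (Finset.mem_univ i)
  let Inv (z : Fin J → ZVert W m n) (s : ZVert W m n) : Prop :=
    ∃ b, s = .inl b ∧ ∀ i, ¬ AdjOrEq H (basePoint (z i)) b
  refine IsEvasionInvariant.not_copsWinWith (Inv := Inv) ⟨?_, ?_⟩ fun z => ?_
  · rintro z _ ⟨b, rfl, hb⟩ i h
    exact hb i (adjOrEq_basePoint h)
  · rintro z _ z' ⟨b, rfl, hb⟩ hz'
    have hne (i) : basePoint (z' i) ≠ b := fun h =>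
      hb i (h ▸ adjOrEq_basePoint (hz' i))
    obtain ⟨b', hbb', -, hb'⟩ := hH.escape _ b (card_lt z')
    exact ⟨.inl b', adjOrEq_inl_inl.2 hbb', b', rfl, fun i => hb' _ (mem_image z' i) (hne i)⟩
  · obtain ⟨b, hb⟩ := hH.exists_forall_not_adjOrEq (card_lt z)
    exact ⟨.inl b, b, rfl, fun i => hb _ (mem_image z i)⟩

theorem exists_forall_notMem_range_armEmb (hJ : J < m) (z : Fin J → ZVert W m n) (w : W) :
    ∃ a, ∀ i, z i ∉ Set.range (armEmb H w a) := by
  by_contra! hcon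
  choose f t ht using hcon
  have hf : f.Injective := fun a a' h => by
    have heq : armEmb H w a (t a) = armEmb H w a' (t a') := by rw [ht, ht, h]
    cases heq
    rfl
  exact hJ.not_ge (by simpa using Fintype.card_le_of_injective f hf)

open Classical in
/-- The base points of the pursuers within distance one of their base point, that is, of those
pursuers who can threaten a vertex of `H`. -/
noncomputable def guardedBases (H : SimpleGraph W) (z : Fin J → ZVert W m n) : Finset W :=
  (Finset.univ.filter fun i => AdjOrEq (armedGraph H m n) (z i) (.inl (basePoint (z i)))).image
    (basePoint ∘ z)

theorem basePoint_mem_guardedBases {z : Fin J → ZVert W m n} {i : Fin J} {b : W}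
    (h : AdjOrEq (armedGraph H m n) (z i) (.inl b)) : basePoint (z i) ∈ guardedBases H z := by
  classical
  exact Finset.mem_image_of_mem _ (by simpa using adjOrEq_inl_basePoint h)

theorem card_guardedBases_le (hH : IsPursuitBase H k) (hk : 1 ≤ k) (z : Fin J → ZVert W m n)
    (b : W) : (guardedBases H z).card ≤
      (Finset.univ.filter fun i => (armedGraph H m n).dist (z i) (.inl b) ≤ 3).card := by
  classical
  refine Finset.card_image_le.trans (Finset.card_le_card fun i hi => ?_)
  simpa using dist_inl_le_three hH hk (Finset.mem_filter.1 hi).2 b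

theorem exists_not_adjOrEq_inl (hH : IsPursuitBase H k) {z : Fin J → ZVert W m n}
    (hz : (guardedBases H z).card < k) :
    ∃ b, ∀ i, ¬ AdjOrEq (armedGraph H m n) (z i) (.inl b) := by
  obtain ⟨b, hb⟩ := hH.exists_forall_not_adjOrEq hz
  exact ⟨b, fun i h => hb _ (basePoint_mem_guardedBases h) (adjOrEq_basePoint h)⟩

theorem exists_adjOrEq_not_adjOrEq_inl (hH : IsPursuitBase H k) {z : Fin J → ZVert W m n}
    (hz : (guardedBases H z).card < k) {b : W} (hb : ∀ i, z i ≠ .inl b) :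
    ∃ b', AdjOrEq H b b' ∧ ∀ i, ¬ AdjOrEq (armedGraph H m n) (z i) (.inl b') := by
  obtain ⟨b', hbb', hne, hb'⟩ := hH.escape _ b hz
  refine ⟨b', hbb', fun i h => ?_⟩
  have hmem := basePoint_mem_guardedBases h
  obtain hzb | hzb := eq_or_ne (basePoint (z i)) b
  · rcases basePoint_of_adjOrEq h with heq | ⟨heq, -⟩
    · exact hne (hzb ▸ hmem) (heq.symm.trans hzb)
    · exact hb i (hzb ▸ heq)
  · exact hb' _ hmem hzb (adjOrEq_basePoint h)

/-- The survivor is on `H` away from every zombie, or escapes along an arm. -/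
def ArmedEvasion (H : SimpleGraph W) (z : Fin J → ZVert W m n) (s : ZVert W m n) : Prop :=
  (∃ b, s = .inl b ∧ ∀ i, ¬ AdjOrEq (armedGraph H m n) (z i) s) ∨
    ∃ b a, ArmEvasion (armEmb H b a) z s

theorem exists_armedEvasion (hH : IsPursuitBase H k) (hk : 1 ≤ k) (hJ : J < m)
    (hn : 4 * (m - k) ≤ n) (z : Fin J → ZVert W m n) : ∃ s, ArmedEvasion H z s := by
  have hG := armedGraph_connected (m := m) (n := n) (hH.connected hk)
  obtain hz | hz := lt_or_ge (guardedBases H z).card k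
  · obtain ⟨b, hb⟩ := exists_not_adjOrEq_inl hH hz
    exact ⟨.inl b, Or.inl ⟨b, rfl, hb⟩⟩
  · obtain ⟨v⟩ := hH.nonempty
    obtain ⟨a, ha⟩ := exists_forall_notMem_range_armEmb (H := H) hJ z v
    let l (i : Fin J) := (armedGraph H m n).dist (z i) (.inl v)
    have hl : LagBudget n 0 l :=
      .of_le_card hJ hn (hz.trans (card_guardedBases_le hH hk z v)) fun i hi =>
        (Finset.mem_filter.1 hi).2
    refine ⟨_, Or.inr ⟨v, a, ArmEvasion.of_trailsBy (fun i => ?_) hl⟩⟩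
    exact add_comm 2 (l i) ▸ TrailsBy.of_notMem_range (isPendantArm_armEmb v a) hG (ha i)

theorem exists_adjOrEq_armedEvasion (hH : IsPursuitBase H k) (hk : 1 ≤ k) (hJ : J < m)
    (hn : 4 * (m - k) ≤ n) {z : Fin J → ZVert W m n} {b : W} (hb : ∀ i, z i ≠ .inl b) :
    ∃ s, AdjOrEq (armedGraph H m n) (.inl b) s ∧ ArmedEvasion H z s := by
  have hG := armedGraph_connected (m := m) (n := n) (hH.connected hk)
  obtain hz | hz := lt_or_ge (guardedBases H z).card k
  · obtain ⟨b', hbb', hb'⟩ := exists_adjOrEq_not_adjOrEq_inl hH hz hb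
    exact ⟨.inl b', adjOrEq_inl_inl.2 hbb', Or.inl ⟨b', rfl, hb'⟩⟩
  · obtain ⟨a, ha⟩ := exists_forall_notMem_range_armEmb (H := H) hJ z b
    have hA := isPendantArm_armEmb (H := H) (n := n) b a
    let l (i : Fin J) := (armedGraph H m n).dist (z i) (.inl b) - 1
    have hl (i) : 3 + l i = (armedGraph H m n).dist (z i) (.inl b) + 2 := by
      have : 0 < (armedGraph H m n).dist (z i) (.inl b) := hG.pos_dist_of_ne (hb i)
      simp only [l]
      omega
    refine ⟨_, Or.inr hA.adj_start, Or.inr ⟨b, a, ArmEvasion.start l (fun i => ?_)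
      (.of_le_card hJ hn (hz.trans (card_guardedBases_le hH hk z b)) fun i hi => ?_)⟩⟩
    · exact hl i ▸ TrailsBy.of_notMem_range hA hG (ha i)
    · exact (Nat.sub_le _ _).trans (Finset.mem_filter.1 hi).2

theorem isEvasionInvariant_armedEvasion (hH : IsPursuitBase H k) (hk : 1 ≤ k) (hJ : J < m)
    (hn : 4 * (m - k) ≤ n) : IsEvasionInvariant (armedGraph H m n) (IsZombieMove (armedGraph H m n))
      (ArmedEvasion H (J := J)) where
  safe := by
    have hG := armedGraph_connected (m := m) (n := n) (hH.connected hk)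
    rintro z s (⟨b, -, hb⟩ | ⟨b, a, h⟩)
    · exact hb
    · exact h.not_adjOrEq (isPendantArm_armEmb b a) hG
  respond := by
    have hG := armedGraph_connected (m := m) (n := n) (hH.connected hk)
    rintro z s z' (⟨b, rfl, hb⟩ | ⟨b, a, h⟩) hz'
    · exact exists_adjOrEq_armedEvasion hH hk hJ hn fun i h => hb i (Or.inr (h ▸ (hz' i).1))
    · obtain ⟨s', hs', h'⟩ :=
        (ArmEvasion.isEvasionInvariant (isPendantArm_armEmb b a) hG).respond h hz'
      exact ⟨s', hs', Or.inr ⟨b, a, h'⟩⟩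

theorem not_zombiesWinWith_armedGraph (hH : IsPursuitBase H k) (hk : 1 ≤ k) (hJ : J < m)
    (hn : 4 * (m - k) ≤ n) : ¬ ZombiesWinWith (armedGraph H m n) J :=
  (isEvasionInvariant_armedEvasion hH hk hJ hn).not_zombiesWinWith (exists_armedEvasion hH hk hJ hn)

end LowerBounds

section UpperBounds

variable {W : Type*} {H : SimpleGraph W} {k m n J : ℕ}
  {L : ZVert W m n → ZVert W m n → ZVert W m n → Prop} {z : Fin J → ZVert W m n}
  {u u' s : ZVert W m n} {l : Fin J → ℕ}

theorem pursuersWin_pathVert (hG : (armedGraph H m n).Connected)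
    (hL : ∀ ⦃z s z'⦄, IsZombieMove (armedGraph H m n) z s z' → L z s z')
    {z : Fin J → ZVert W m n} {w : W} {c d : ℕ} {i : Fin J} (hi : z i = pathVert w c) (hcd : c ≤ d)
    (hd : d ≤ n) : PursuersWin (armedGraph H m n) L z (pathVert w d) := by
  have hdist := dist_pathVert hG w hcd hd
  obtain hdc | hdc := le_or_gt d (c + 1)
  · refine .of_adjOrEq hG hL (i := i) ?_
    rw [adjOrEq_iff_dist_le_one hG, hi]
    omega
  have hmove : IsZombieMove (armedGraph H m n) (pathVert w c) (pathVert w d)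
      (pathVert w (c + 1)) := by
    refine ⟨pathVert_adj_succ w (by omega), ?_⟩
    have := dist_pathVert hG w hdc.le hd
    omega
  refine .of_isZombieMove hG hL (· = i) (fun _ => pathVert w (c + 1))
    (by rintro _ rfl; exact hi ▸ hmove) fun z' _ hz' s' hs' _ => ?_
  obtain ⟨d', hd', hdd', rfl⟩ := exists_eq_pathVert_of_adjOrEq (by omega) hd hs'
  exact pursuersWin_pathVert hG hL (hz' i rfl) (by omega) hd'
termination_by n - c

/-- The pursuers win whenever the evader is on an arm at some `w` and the pursuers are off the arms
at `w`, at distances `l i` from `w`. -/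
def WinsOnArms (H : SimpleGraph W) (L : ZVert W m n → ZVert W m n → ZVert W m n → Prop)
    (l : Fin J → ℕ) : Prop :=
  ∀ ⦃z : Fin J → ZVert W m n⦄ ⦃w⦄, (∀ i a, z i ∉ Set.range (armEmb H w a)) →
    (∀ i, (armedGraph H m n).dist (z i) (.inl w) = l i) →
    ∀ a t, PursuersWin (armedGraph H m n) L z (armEmb H w a t)

theorem WinsOnArms.pursuersWin (hl : WinsOnArms H L l) (hG : (armedGraph H m n).Connected)
    (hL : ∀ ⦃z s z'⦄, IsZombieMove (armedGraph H m n) z s z' → L z s z') (hl0 : ∃ i, l i = 0)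
    (hz : ∀ i a, z i ∉ Set.range (armEmb H (basePoint s) a))
    (hzl : ∀ i, (armedGraph H m n).dist (z i) (.inl (basePoint s)) = l i) :
    PursuersWin (armedGraph H m n) L z s := by
  rcases zVert_cases (H := H) s with ⟨j, hj, hs⟩ | ⟨a, t, hs⟩
  · obtain ⟨i, hi⟩ := hl0
    rw [hs]
    exact pursuersWin_pathVert hG hL (hG.dist_eq_zero_iff.1 ((hzl i).trans hi)) j.zero_le hj
  · rw [hs]
    exact hl hz hzl a t

theorem isZombieMove_of_isZombieMove_inl (hG : (armedGraph H m n).Connected)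
    (hu : u ∈ offBranch (basePoint s)) (hu' : u' ∈ offBranch (basePoint s))
    (h : IsZombieMove (armedGraph H m n) u (.inl (basePoint s)) u') :
    IsZombieMove (armedGraph H m n) u s u' := by
  refine ⟨h.1, ?_⟩
  rw [dist_eq_of_mem_offBranch hG hu, dist_eq_of_mem_offBranch hG hu']
  exact Nat.add_lt_add_right h.2 _

theorem mem_offBranch_of_isZombieMove (hG : (armedGraph H m n).Connected) {d : ℕ}
    (hu : u ∈ offBranch (basePoint s))
    (hd : (armedGraph H m n).dist u (.inl (basePoint s)) = d + 1)
    (h : IsZombieMove (armedGraph H m n) u s u') :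
    u' ∈ offBranch (basePoint s) ∧ (armedGraph H m n).dist u' (.inl (basePoint s)) = d := by
  have hne : u ≠ .inl (basePoint s) := by
    rintro rfl
    simp at hd
  have hu' := (isCut_offBranch _).mem_of_isZombieMove hu h hne
  have h₁ := h.dist_add_one hG
  rw [dist_eq_of_mem_offBranch hG hu, dist_eq_of_mem_offBranch hG hu'] at h₁
  exact ⟨hu', by omega⟩

theorem WinsOnArms.pursuersWin_of_dist_eq_succ (hl : WinsOnArms H L l)
    (hG : (armedGraph H m n).Connected)
    (hL : ∀ ⦃z s z'⦄, IsZombieMove (armedGraph H m n) z s z' → L z s z') (hl0 : ∃ i, l i = 0)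
    (hz : ∀ i, z i ∈ offBranch (basePoint s))
    (hzl : ∀ i, (armedGraph H m n).dist (z i) (.inl (basePoint s)) = l i + 1) :
    PursuersWin (armedGraph H m n) L z s := by
  obtain hs | hs := eq_or_ne s (.inl (basePoint s))
  · obtain ⟨i, hi⟩ := hl0
    refine .of_adjOrEq hG hL (i := i) ((adjOrEq_iff_dist_le_one hG).2 ?_)
    rw [hs, hzl, hi]
  · refine .of_isZombieMove hG hL (fun _ => False) z (fun _ => False.elim)
      fun z' hz' _ s' hs' _ => ?_
    have hz'w (i) := mem_offBranch_of_isZombieMove hG (hz i) (hzl i) (hz' i)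
    rw [(basePoint_of_adjOrEq hs').resolve_right fun h => hs h.1] at hz'w
    exact hl.pursuersWin hG hL hl0 (fun i => notMem_range_armEmb_of_mem_offBranch (hz'w i).1)
      fun i => (hz'w i).2

theorem dist_pathVert_inl (hG : (armedGraph H m n).Connected) (v w : W) {c : ℕ} (hc : c ≤ n) :
    (armedGraph H m n).dist (pathVert v c) (.inl w) =
      c + (armedGraph H m n).dist (.inl v) (.inl w) := by
  have hdist := dist_pathVert hG v c.zero_le hc
  obtain rfl | hvw := eq_or_ne w v
  · rw [dist_comm, dist_self]
    exact (Nat.zero_add _).symm.trans hdist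
  have h := dist_eq_of_mem_offBranch hG (s := (pathVert v c : ZVert W m n))
    (mem_offBranch_of_ne (u := .inl w) (by rwa [basePoint_pathVert]))
  rw [basePoint_pathVert, dist_comm, dist_comm (G := armedGraph H m n) (u := .inl w)] at h
  rw [pathVert_zero] at hdist
  omega

theorem WinsOnArms.pursuersWin_of_not_adjOrEq (hl : WinsOnArms H L l) (hH : IsPursuitBase H k)
    (hk : 1 ≤ k) (hkJ : k ≤ J)
    (hL : ∀ ⦃z s z'⦄, IsZombieMove (armedGraph H m n) z s z' → L z s z')
    (hln : ∀ i, l i ≤ n) (hlk : ∀ i : Fin J, (i : ℕ) < k → l i = 0) {v : W}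
    (hvs : ¬ AdjOrEq H v (basePoint s)) :
    PursuersWin (armedGraph H m n) L (fun i => pathVert v (l i)) s := by
  have hG := armedGraph_connected (m := m) (n := n) (hH.connected hk)
  have hv : v ≠ basePoint s := fun h => hvs (h ▸ .refl v)
  have hoff (i) : (pathVert v (l i) : ZVert W m n) ∈ offBranch (basePoint s) :=
    mem_offBranch_of_ne (by rwa [basePoint_pathVert])
  have hdist (i) : (armedGraph H m n).dist (pathVert v (l i)) (.inl (basePoint s)) = l i + 1 + 1 :=
    by rw [dist_pathVert_inl hG _ _ (hln i), dist_inl_inl_eq_two hH hk hvs]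
  obtain ⟨f, hf, hcover⟩ := hH.intercept hvs
  let u (i : Fin J) : ZVert W m n := if hi : (i : ℕ) < k then .inl (f ⟨i, hi⟩) else .inl v
  have hu (i : Fin J) (hi : (i : ℕ) < k) : u i = .inl (f ⟨i, hi⟩) := dif_pos hi
  refine .of_isZombieMove hG hL (fun i => (i : ℕ) < k) u (fun i hi => ?_)
    fun z' hz' hz'u s' hs' hfar => ?_
  · rw [hu i hi, hlk i hi, pathVert_zero]
    refine isZombieMove_of_isZombieMove_inl hG (mem_offBranch_of_ne hv)
      (mem_offBranch_of_ne (hf _).2.ne) ?_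
    exact isZombieMove_of_adj_of_adjOrEq hG (armedGraph_adj_inl_inl.2 (hf _).1)
      (adjOrEq_inl_inl.2 (Or.inr (hf _).2)) (mt adjOrEq_inl_inl.1 hvs)
  · have hz'w (i) := mem_offBranch_of_isZombieMove hG (hoff i) (hdist i) (hz' i)
    have hs's : basePoint s = basePoint s' := by
      refine (basePoint_of_adjOrEq hs').resolve_right fun ⟨_, hinl, hadj⟩ => ?_
      obtain ⟨i, hi⟩ := hcover _ (Or.inr hadj)
      refine hfar ⟨i, i.2.trans_le hkJ⟩ ?_
      rw [hz'u _ i.2, hu _ i.2, hinl]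
      exact adjOrEq_inl_inl.2 hi
    rw [hs's] at hz'w
    exact hl.pursuersWin_of_dist_eq_succ hG hL ⟨⟨0, hk.trans hkJ⟩, hlk _ hk⟩ (fun i => (hz'w i).1)
      fun i => (hz'w i).2

theorem WinsOnArms.pursuersWin_of_eq_pathVert (hl : WinsOnArms H L l) (hH : IsPursuitBase H k)
    (hk : 1 ≤ k) (hkJ : k ≤ J)
    (hL : ∀ ⦃z s z'⦄, IsZombieMove (armedGraph H m n) z s z' → L z s z')
    (hln : ∀ i, l i ≤ n) (hlk : ∀ i : Fin J, (i : ℕ) < k → l i = 0) (v : W) (s : ZVert W m n) :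
    PursuersWin (armedGraph H m n) L (fun i => pathVert v (l i)) s := by
  have hG := armedGraph_connected (m := m) (n := n) (hH.connected hk)
  have hl0 : ∃ i, l i = 0 := ⟨⟨0, hk.trans hkJ⟩, hlk _ hk⟩
  by_cases hvs : AdjOrEq H v (basePoint s)
  · rcases hvs with heq | hadj
    · refine hl.pursuersWin hG hL hl0 (fun i => pathVert_notMem_range_armEmb _ _ _) fun i => ?_
      rw [dist_pathVert_inl hG _ _ (hln i), heq, dist_self, add_zero]
    · refine hl.pursuersWin_of_dist_eq_succ hG hL hl0
        (fun i => mem_offBranch_of_ne (by rw [basePoint_pathVert]; exact hadj.ne)) fun i => ?_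
      rw [dist_pathVert_inl hG _ _ (hln i), dist_eq_one_iff_adj.2 (armedGraph_adj_inl_inl.2 hadj)]
  · exact hl.pursuersWin_of_not_adjOrEq hH hk hkJ hL hln hlk hvs

theorem winsOnArms_zero (hG : (armedGraph H m n).Connected) (hJ : 0 < J) :
    WinsOnArms H (IsCopMove (armedGraph H m n)) fun _ : Fin J => 0 := fun _ _ _ hz a t =>
  (isPendantArm_armEmb _ a).copsWin_of_root (p := ⟨0, hJ⟩) hG (hG.dist_eq_zero_iff.1 (hz _))
    ⟨t, rfl⟩

theorem copsWinWith_armedGraph (hH : IsPursuitBase H k) (hk : 1 ≤ k) :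
    CopsWinWith (armedGraph H m n) k := by
  obtain ⟨v⟩ := hH.nonempty
  have hl := winsOnArms_zero (m := m) (n := n) (armedGraph_connected (hH.connected hk)) hk
  exact copsWinWith_of_pursuersWin _ (hl.pursuersWin_of_eq_pathVert hH hk le_rfl
    (fun _ _ _ => IsZombieMove.isCopMove) (fun _ => n.zero_le) (fun _ _ => rfl) v)

theorem WellSpaced.winsOnArms (hl : WellSpaced n 0 l) (hG : (armedGraph H m n).Connected) :
    WinsOnArms H (IsZombieMove (armedGraph H m n)) l := by
  intro z w hz hzl a t
  have hA := isPendantArm_armEmb (H := H) (n := n) w a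
  obtain rfl | ht := eq_or_ne t .start
  · obtain ⟨i, hi⟩ := hl.zero
    refine .of_adjOrEq hG (fun _ _ _ => id) (i := i) (Or.inr ?_)
    rw [hG.dist_eq_zero_iff.1 ((hzl i).trans hi)]
    exact hA.adj_start
  · refine hA.lineupWins hG n.zero_le hl
      (apply_mem_armBeyond_iff.2 (ArmVert.isBeyond_zero_iff.2 ht)) fun i => ?_
    rw [← hzl, add_comm]
    exact .of_notMem_range hA hG (hz i a)

theorem zombiesWinWith_armedGraph (hH : IsPursuitBase H k) (hk : 1 ≤ k) (hkm : k ≤ m) :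
    ZombiesWinWith (armedGraph H m (4 * (m - k))) m := by
  obtain ⟨v⟩ := hH.nonempty
  let l (i : Fin m) := 4 * (i + 1 - k)
  have hl : WellSpaced (4 * (m - k)) 0 l := by
    refine ⟨⟨⟨0, by omega⟩, by simp only [l]; omega⟩, fun i hi => ?_,
      ⟨⟨m - 1, by omega⟩, by simp only [l]; omega⟩⟩
    simp only [l] at hi
    exact ⟨⟨i - 1, by omega⟩, by simp only [l]; omega, by simp only [l]; omega⟩
  have hwin := hl.winsOnArms (m := m) (armedGraph_connected (hH.connected hk))
  exact zombiesWinWith_of_pursuersWin _ (hwin.pursuersWin_of_eq_pathVert hH hk hkm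
    (fun _ _ _ => id) (fun i => by simp only [l]; omega) (fun i hi => by simp only [l]; omega) v)

end UpperBounds

theorem ZGraph_cop_and_zombie_number_general {W : Type*} {H : SimpleGraph W} {k m : ℕ}
    (hH : IsPursuitBase H k) (hk : 1 ≤ k) (hkm : k ≤ m) :
    copNumber (ZGraph H k m) = k ∧ zombieNumber (ZGraph H k m) = m := by
  have cops : IsLeast {j | CopsWinWith (ZGraph H k m) j} k :=
    ⟨copsWinWith_armedGraph hH hk,
      fun _ hj => not_lt.1 fun hlt => not_copsWinWith_armedGraph hH hlt hj⟩
  have zombies : IsLeast {j | ZombiesWinWith (ZGraph H k m) j} m :=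
    ⟨zombiesWinWith_armedGraph hH hk hkm,
      fun _ hj => not_lt.1 fun hlt => not_zombiesWinWith_armedGraph hH hk hlt le_rfl hj⟩
  exact ⟨cops.csInf_eq, zombies.csInf_eq⟩

/-- Let `m ≥ k ≥ 1` and let `H` be a single vertex if `k = 1`, or the block intersection
graph of a balanced incomplete block design with parameters `(v, k, 1)` where
`v > k(k-1)² + 1` if `k ≥ 2`.  Then `c(Z_{k,m}(H)) = k` and `z(Z_{k,m}(H)) = m`. -/
theorem ZGraph_cop_and_zombie_number {W : Type*} (H : SimpleGraph W) (k m : ℕ)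
    (hk : 1 ≤ k) (hkm : k ≤ m)
    (hH : (k = 1 ∧ Nat.card W = 1 ∧ H = ⊥) ∨
      (2 ≤ k ∧ ∃ (P : Type) (B : Finset (Finset P)) (v : ℕ), Finite P ∧
        IsBIBD P B v k ∧ k * (k - 1) ^ 2 + 1 < v ∧ Nonempty (H ≃g blockGraph B))) :
    copNumber (ZGraph H k m) = k ∧ zombieNumber (ZGraph H k m) = m := by
  obtain ⟨rfl, hcard, -⟩ | ⟨hk2, P, B, v, -, hB, hv, ⟨e⟩⟩ := hH
  · obtain ⟨_, _⟩ := Nat.card_eq_one_iff_unique.1 hcard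
    exact ZGraph_cop_and_zombie_number_general (isPursuitBase_one_of_subsingleton H) hk hkm
  · have hbase := hB.isPursuitBase_blockGraph hk2 hv
    exact ZGraph_cop_and_zombie_number_general (hbase.of_iso e) hk hkm
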